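/- arXiv:0905.1860 — 2 statements merged into one kernel-verified Lean document; each statement's English description precedes it below -/
import Mathlib

section
/- Let V = ℂ² with G = SL(2,ℂ) acting by left matrix multiplication, and let R_d be the space of binary forms of degree d with the induced G-action (g·p)(v) = p(g⁻¹·v). For every m, d ≥ 1, the dimension of the space T^m(R_d^*)^G of G-invariant m-linear forms on R_d equals the number of m-partite noncrossing pair partitions of the set {1, 2, ..., md} (with respect to the consecutive intervals of length d). -/
/-!
Let `W` be the space of coefficient functions `c : (Fin m → Fin (d + 1)) → ℂ` of `m`-linear forms.

*Representation theory.* Binary forms of degree `d` are spanned by `d`-th powers of linear forms, so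
invariance may be tested on those, and it may be tested on the two one-parameter groups of
transvections, which generate `SL(2, ℂ)`. Differentiating, the form of `c` is invariant if and only
if `c` is killed by the operators `E` and `F` of the `sl₂`-action on `W`
(`mem_invariantForms_iff_annihilated`). With respect to the Hermitian product on `W` with weights
`∏ 1 / binom(d, K i)`, the operators `E` and `F` are adjoint. Together with `E F - F E = H` this shows
that a vector of weight `0` killed by `E` is killed by `F`, and that `E F = F E + 2` is positive
definite on the weight space `W₂`, so that `E : W₀ → W₂` is onto. Therefore the dimension sought is
`dim W₀ - dim W₂` (`finrank_annihilated`), a difference of two numbers of multi-indices.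

*Reflection principle.* A multi-index `K` is read as a lattice path whose `i`-th move consists of
`d - K i` down steps and then `K i` up steps; its weight is the final height. By a reflection argument
`dim W₀ - dim W₂` is the number of those paths that end at height `0` and never become negative
(`numAdm_eq`).

*Bijection.* Such a path is a Dyck path of length `m d`, and matching each up step with the down step
returning to its level gives a noncrossing pair partition. It is `m`-partite since in each interval of
length `d` the down steps come first. Conversely, in a noncrossing `m`-partite pair partition the
closing elements precede the opening ones in each interval, so every such partition arises exactly
once (`toPartition_injective`, `toPartition_surjective`).
-/

/-- The binary form of degree `d` with (normalized) coefficients `ξ`, evaluated at the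
vector `v ∈ ℂ²`:  `p_ξ(v) = Σ_{k=0}^{d} binom(d,k) ξ_k v₀^k v₁^{d−k}`.
The coefficient vector `ξ : Fin (d+1) → ℂ` is a faithful model of the space `R_d`
of binary forms of degree `d`. -/
noncomputable def Pval (d : ℕ) (ξ : Fin (d + 1) → ℂ) (v : Fin 2 → ℂ) : ℂ :=
  ∑ k : Fin (d + 1), (d.choose (k : ℕ) : ℂ) * ξ k * v 0 ^ (k : ℕ) * v 1 ^ (d - (k : ℕ))

/-- The space `T^m(R_d^*)^G` of `SL(2,ℂ)`-invariant `m`-linear forms on the space `R_d`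
of binary forms of degree `d` (modelled by coefficient vectors in `Fin (d+1) → ℂ`).
Invariance of `F` means `F(g·p₁, ..., g·p_m) = F(p₁, ..., p_m)` for every `g ∈ SL(2,ℂ)`,
where `(g·p)(v) = p(g⁻¹·v)`; here `g·p_{ξ i} = p_{η i}` is expressed through the
evaluations `Pval`. -/
noncomputable def invariantForms (d m : ℕ) :
    Submodule ℂ (MultilinearMap ℂ (fun _ : Fin m => (Fin (d + 1) → ℂ)) ℂ) where
  carrier := {F | ∀ g : Matrix.SpecialLinearGroup (Fin 2) ℂ,
    ∀ ξ η : Fin m → (Fin (d + 1) → ℂ),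
      (∀ i v, Pval d (η i) v = Pval d (ξ i)
          (((g⁻¹ : Matrix.SpecialLinearGroup (Fin 2) ℂ) : Matrix (Fin 2) (Fin 2) ℂ).mulVec v)) →
      F η = F ξ}
  add_mem' := by
    intro F G hF hG g ξ η h
    simp only [MultilinearMap.add_apply, hF g ξ η h, hG g ξ η h]
  zero_mem' := by intro g ξ η h; simp
  smul_mem' := by
    intro c F hF g ξ η h
    simp only [MultilinearMap.smul_apply, hF g ξ η h]

/-- `i` and `j` lie in the same block of the partition `π`. -/
def SameBlock {n : ℕ} (π : Finpartition (Finset.univ : Finset (Fin n))) (i j : Fin n) : Prop :=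
  ∃ B ∈ π.parts, i ∈ B ∧ j ∈ B

/-- A partition of `{1, ..., n}` is noncrossing if there are no
`i < i' < j < j'` with `i ~ j`, `i' ~ j'` and `i ≁ i'`. -/
def IsNoncrossing {n : ℕ} (π : Finpartition (Finset.univ : Finset (Fin n))) : Prop :=
  ∀ i i' j j' : Fin n, i < i' → i' < j → j < j' →
    SameBlock π i j → SameBlock π i' j' → SameBlock π i i'

/-- A pair partition: every block has exactly two elements. -/
def IsPairPartition {n : ℕ} (π : Finpartition (Finset.univ : Finset (Fin n))) : Prop :=
  ∀ B ∈ π.parts, B.card = 2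

/-- An `m`-partite partition (with respect to the consecutive intervals of length `d`):
every block contains at most one element from each interval
`{kd+1, ..., (k+1)d}` (0-indexed: the elements `i` with `i / d = k`). -/
def IsMPartite {n : ℕ} (d : ℕ) (π : Finpartition (Finset.univ : Finset (Fin n))) : Prop :=
  ∀ B ∈ π.parts, ∀ k : ℕ, (B.filter (fun i : Fin n => (i : ℕ) / d = k)).card ≤ 1

open Finset Function

/-! ### Operators on functions of several indices -/

section LinearAlgebra
variable {ι κ : Type*} [DecidableEq ι] [Fintype κ]

/-- The operator on functions `(ι → κ) → ℂ`, i.e. on the tensor power `⨂_ι ℂ^κ`, which applies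
the matrix `A` in the `i`-th tensor factor. -/
def slot (A : Matrix κ κ ℂ) (i : ι) : ((ι → κ) → ℂ) →ₗ[ℂ] ((ι → κ) → ℂ) where
  toFun c K := ∑ k, A (K i) k * c (update K i k)
  map_add' c c' := by
    ext K; simp [mul_add, Finset.sum_add_distrib]
  map_smul' a c := by
    ext K; simp [Finset.mul_sum, mul_left_comm]

theorem slot_apply (A : Matrix κ κ ℂ) (i : ι) (c : (ι → κ) → ℂ) (K : ι → κ) :
    slot A i c K = ∑ k, A (K i) k * c (update K i k) := rfl

theorem slot_comp (A B : Matrix κ κ ℂ) (i : ι) (c : (ι → κ) → ℂ) :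
    slot A i (slot B i c) = slot (A * B) i c := by
  ext K
  simp only [slot_apply, Matrix.mul_apply, Finset.mul_sum, Finset.sum_mul, update_self,
    update_idem]
  rw [Finset.sum_comm]
  simp [mul_assoc]

theorem slot_comm (A B : Matrix κ κ ℂ) {i j : ι} (h : i ≠ j) (c : (ι → κ) → ℂ) :
    slot A i (slot B j c) = slot B j (slot A i c) := by
  ext K
  simp only [slot_apply, Finset.mul_sum, update_of_ne h, update_of_ne h.symm]
  rw [Finset.sum_comm]
  refine Finset.sum_congr rfl fun k _ => Finset.sum_congr rfl fun l _ => ?_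
  rw [update_comm h]; ring

theorem slot_sub (A B : Matrix κ κ ℂ) (i : ι) (c : (ι → κ) → ℂ) :
    slot (A - B) i c = slot A i c - slot B i c := by
  ext K
  simp [slot_apply, sub_mul]

variable [Fintype ι]

/-- Reindexing by the involution `(K, k) ↦ (update K i k, K i)` of `(ι → κ) × κ`. -/
theorem sum_update_swap (i : ι) (g : (ι → κ) → (ι → κ) → ℂ) :
    ∑ K, ∑ k, g K (update K i k) = ∑ K, ∑ k, g (update K i k) K := by
  rw [← Fintype.sum_prod_type' (f := fun K k => g K (update K i k)),
    ← Fintype.sum_prod_type' (f := fun K k => g (update K i k) K)]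
  refine Finset.sum_bij' (fun x _ => (update x.1 i x.2, x.1 i))
    (fun x _ => (update x.1 i x.2, x.1 i)) ?_ ?_ ?_ ?_ ?_ <;> simp

theorem slot_adjoint (A : Matrix κ κ ℂ) (i : ι) (c φ : (ι → κ) → ℂ) :
    ∑ K, slot A i c K * φ K = ∑ K, c K * slot A.transpose i φ K := by
  have := sum_update_swap i (fun K K' => A (K i) (K' i) * c K' * φ K)
  simp only [update_self] at this
  simp only [slot_apply, Finset.sum_mul, Finset.mul_sum, Matrix.transpose_apply, this]
  refine Finset.sum_congr rfl fun k _ => Finset.sum_congr rfl fun l _ => ?_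
  ring

/-- The derivation action of `A` on the tensor power: the sum of its actions in all factors. -/
def total (A : Matrix κ κ ℂ) : ((ι → κ) → ℂ) →ₗ[ℂ] ((ι → κ) → ℂ) := ∑ i, slot A i

theorem total_apply (A : Matrix κ κ ℂ) (c : (ι → κ) → ℂ) (K : ι → κ) :
    total A c K = ∑ i, slot A i c K := by
  simp [total]

theorem total_apply' (A : Matrix κ κ ℂ) (c : (ι → κ) → ℂ) :
    total A c = ∑ i, slot A i c := by
  simp [total]

theorem total_commutator (A B : Matrix κ κ ℂ) (c : (ι → κ) → ℂ) :
    total A (total B c) = total B (total A c) + total (A * B - B * A) c := by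
  simp only [total_apply', map_sum]
  rw [Finset.sum_comm (f := fun i j => slot B j (slot A i c)), ← sub_eq_iff_eq_add',
    ← Finset.sum_sub_distrib]
  refine Finset.sum_congr rfl fun i _ => ?_
  rw [← Finset.sum_sub_distrib, Finset.sum_eq_single i]
  · rw [slot_comp, slot_comp, slot_sub]
  · intro j _ hj
    rw [slot_comm A B hj, sub_self]
  · simp

theorem total_diagonal [DecidableEq κ] (e : κ → ℂ) (c : (ι → κ) → ℂ) (K : ι → κ) :
    total (Matrix.diagonal e) c K = (∑ i, e (K i)) * c K := by
  simp [total_apply, slot_apply, Matrix.diagonal_apply, Finset.sum_mul]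

theorem total_star (A : Matrix κ κ ℂ) (hA : ∀ i j, star (A i j) = A i j)
    (c : (ι → κ) → ℂ) : total A (star c) = star (total A c) := by
  ext K
  have hA' : ∀ i j, (starRingEnd ℂ) (A i j) = A i j := hA
  simp [total_apply, slot_apply, hA']

/-- The product weight on multi-indices induced by a weight `ω` on `κ`. -/
def wprod (ω : κ → ℝ) (K : ι → κ) : ℝ := ∏ i, ω (K i)

/-- The bilinear pairing of coefficient functions weighted by `wprod ω`. -/
def pairing (ω : κ → ℝ) (c φ : (ι → κ) → ℂ) : ℂ := ∑ K, (wprod ω K : ℂ) * (c K * φ K)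

theorem pairing_comm (ω : κ → ℝ) (c φ : (ι → κ) → ℂ) : pairing ω c φ = pairing ω φ c := by
  simp only [pairing, mul_comm (c _)]

/-- If `A` and `B` are adjoint for the pairing weighted by `ω` on `ℂ^κ`, then their derivation
actions are adjoint on the tensor power. -/
theorem pairing_adjoint (ω : κ → ℝ) (A B : Matrix κ κ ℂ)
    (h : ∀ k l, (ω k : ℂ) * B k l = A l k * ω l) (c φ : (ι → κ) → ℂ) :
    pairing ω (total A c) φ = pairing ω c (total B φ) := by
  have key : ∀ i, ∑ K, (wprod ω K : ℂ) * (slot A i c K * φ K) =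
      ∑ K, (wprod ω K : ℂ) * (c K * slot B i φ K) := by
    intro i
    have := slot_adjoint A i c (fun K => (wprod ω K : ℂ) * φ K)
    rw [Finset.sum_congr rfl (fun K _ => by rw [mul_left_comm])] at this
    rw [this]
    refine Finset.sum_congr rfl fun K _ => ?_
    simp only [slot_apply, Finset.mul_sum, Matrix.transpose_apply]
    refine Finset.sum_congr rfl fun k _ => ?_
    have h2 : A k (K i) * (wprod ω (update K i k) : ℂ) = (wprod ω K : ℂ) * B (K i) k := by
      simp only [wprod]
      rw [← Finset.mul_prod_erase univ _ (mem_univ i),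
        ← Finset.mul_prod_erase univ (fun j => ω (K j)) (mem_univ i)]
      have : ∏ j ∈ univ.erase i, ω (update K i k j) = ∏ j ∈ univ.erase i, ω (K j) :=
        Finset.prod_congr rfl fun j hj => by rw [update_of_ne (Finset.ne_of_mem_erase hj)]
      rw [this, update_self]
      push_cast
      rw [mul_right_comm, h, mul_assoc]
    rw [← mul_assoc (A k (K i)), h2]
    ring
  simp only [pairing, total_apply, Finset.sum_mul, Finset.mul_sum]
  rw [Finset.sum_comm, Finset.sum_comm (f := fun K i => (wprod ω K : ℂ) * (c K * slot B i φ K))]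
  exact Finset.sum_congr rfl fun i _ => key i

/-- The square of the weighted Hermitian norm, `Σ_K ω(K) |c_K|²`. -/
def qform (ω : κ → ℝ) (c : (ι → κ) → ℂ) : ℝ := ∑ K, wprod ω K * Complex.normSq (c K)

theorem pairing_star (ω : κ → ℝ) (c : (ι → κ) → ℂ) : pairing ω c (star c) = qform ω c := by
  simp [pairing, qform, Complex.mul_conj]

theorem qform_nonneg {ω : κ → ℝ} (hω : ∀ k, 0 < ω k) (c : (ι → κ) → ℂ) : 0 ≤ qform ω c :=
  Finset.sum_nonneg fun _ _ =>
    mul_nonneg (Finset.prod_nonneg fun _ _ => (hω _).le) (Complex.normSq_nonneg _)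

theorem eq_zero_of_qform {ω : κ → ℝ} (hω : ∀ k, 0 < ω k) {c : (ι → κ) → ℂ}
    (h : qform ω c = 0) : c = 0 := by
  ext K
  have hpos : ∀ K : ι → κ, 0 < wprod ω K := fun K => Finset.prod_pos fun i _ => hω _
  rw [qform, Finset.sum_eq_zero_iff_of_nonneg
    (fun K _ => mul_nonneg (hpos K).le (Complex.normSq_nonneg _))] at h
  have := (mul_eq_zero.1 (h K (mem_univ K))).resolve_left (hpos K).ne'
  simpa using this

end LinearAlgebra

/-! ### The action of sl₂ on coefficient functions -/

section sl2

/-- The raising operator of the `(d+1)`-dimensional irreducible representation of `sl₂`. -/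
def matE (d : ℕ) : Matrix (Fin (d + 1)) (Fin (d + 1)) ℂ :=
  fun l k => if (l : ℕ) = k + 1 then (d : ℂ) - (k : ℕ) else 0

/-- The lowering operator of the `(d+1)`-dimensional irreducible representation of `sl₂`. -/
def matF (d : ℕ) : Matrix (Fin (d + 1)) (Fin (d + 1)) ℂ :=
  fun l k => if (k : ℕ) = l + 1 then ((k : ℕ) : ℂ) else 0

/-- The diagonal weight operator, with eigenvalues `-d, -d+2, ..., d`. -/
def matH (d : ℕ) : Matrix (Fin (d + 1)) (Fin (d + 1)) ℂ :=
  Matrix.diagonal fun k => 2 * ((k : ℕ) : ℂ) - d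

theorem sum_ite_val_succ {d : ℕ} (k : Fin (d + 1)) (f : Fin (d + 1) → ℂ) :
    (∑ j : Fin (d + 1), if (j : ℕ) = k + 1 then f j else 0) =
      if h : (k : ℕ) + 1 < d + 1 then f ⟨k + 1, h⟩ else 0 := by
  split_ifs with h
  · rw [Finset.sum_eq_single ⟨k + 1, h⟩]
    · simp
    · intro j _ hj
      rw [if_neg]; intro h'; exact hj (Fin.ext h')
    · simp
  · refine Finset.sum_eq_zero fun j _ => if_neg ?_
    omega

theorem sum_ite_succ_val {d : ℕ} (k : Fin (d + 1)) (f : Fin (d + 1) → ℂ) :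
    (∑ j : Fin (d + 1), if (k : ℕ) = j + 1 then f j else 0) =
      if h : 0 < (k : ℕ) then f ⟨k - 1, by omega⟩ else 0 := by
  split_ifs with h
  · rw [Finset.sum_eq_single ⟨k - 1, by omega⟩]
    · rw [if_pos]; simp; omega
    · intro j _ hj
      rw [if_neg]; intro h'; exact hj (Fin.ext (by simp; omega))
    · simp
  · refine Finset.sum_eq_zero fun j _ => if_neg ?_
    omega

theorem matE_matF_commutator (d : ℕ) : matE d * matF d - matF d * matE d = matH d := by
  ext l k
  have h1 : (matE d * matF d) l k = if l = k then ((k : ℕ) : ℂ) * (d - (k : ℕ) + 1) else 0 := by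
    simp only [Matrix.mul_apply, matE, matF, ite_mul, zero_mul]
    rw [sum_ite_succ_val]
    by_cases hl : 0 < (l : ℕ)
    · have : (k : ℕ) = (l : ℕ) - 1 + 1 ↔ l = k := by rw [Fin.ext_iff]; omega
      simp only [hl, dif_pos, this]
      split_ifs with hlk
      · subst hlk
        rw [Nat.cast_sub hl]; push_cast; ring
      · simp
    · have hl0 : (l : ℕ) = 0 := by omega
      simp only [hl, dif_neg, not_false_eq_true]
      split_ifs with hlk
      · subst hlk; simp [hl0]
      · rfl
  have h2 : (matF d * matE d) l k =
      if l = k then ((k : ℕ) + 1 : ℂ) * (d - (k : ℕ)) else 0 := by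
    simp only [Matrix.mul_apply, matE, matF, ite_mul, zero_mul]
    rw [sum_ite_val_succ]
    by_cases hl : (l : ℕ) + 1 < d + 1
    · have : (l : ℕ) + 1 = (k : ℕ) + 1 ↔ l = k := by rw [Fin.ext_iff]; omega
      simp only [hl, dif_pos, this]
      split_ifs with hlk
      · subst hlk; push_cast; ring
      · simp
    · have hl0 : (l : ℕ) = d := by omega
      simp only [hl, dif_neg, not_false_eq_true]
      split_ifs with hlk
      · subst hlk; simp [hl0]
      · rfl
  rw [Matrix.sub_apply, h1, h2, matH, Matrix.diagonal_apply]
  split_ifs with h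
  · subst h; ring
  · simp

/-- The weight `1 / binom(d,k)`, for which `matE d` and `matF d` are mutually adjoint. -/
noncomputable def omg (d : ℕ) (k : Fin (d + 1)) : ℝ := ((d.choose k : ℕ) : ℝ)⁻¹

theorem omg_pos (d : ℕ) (k : Fin (d + 1)) : 0 < omg d k := by
  have := Nat.choose_pos (n := d) (k := k) (by omega)
  unfold omg; positivity

theorem omg_matF (d : ℕ) (k l : Fin (d + 1)) :
    (omg d k : ℂ) * matF d k l = matE d l k * omg d l := by
  simp only [matE, matF, omg]
  split_ifs with h
  · have h1 := Nat.choose_succ_right_eq d k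
    rw [h]
    have p1 : ((d.choose k : ℕ) : ℂ) ≠ 0 := by
      exact_mod_cast (Nat.choose_pos (n := d) (k := k) (by omega)).ne'
    have p2 : ((d.choose (k + 1) : ℕ) : ℂ) ≠ 0 := by
      exact_mod_cast (Nat.choose_pos (n := d) (k := k + 1) (by omega)).ne'
    have h3 : ((d.choose (k + 1) : ℕ) : ℂ) * ((k : ℕ) + 1) = d.choose k * (d - (k : ℕ)) := by
      rw [← Nat.cast_sub (by omega)]; exact_mod_cast h1
    push_cast
    field_simp
    linear_combination h3
  · simp

variable {m d : ℕ}

/-- Coefficients of `m`-linear forms on `ℂ^{d+1}` with respect to the standard basis. -/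
abbrev Coeffs (m d : ℕ) := (Fin m → Fin (d + 1)) → ℂ

/-- The weight of a multi-index: the `H`-eigenvalue of the corresponding basis vector. -/
def wt (K : Fin m → Fin (d + 1)) : ℤ := ∑ i, (2 * ((K i : ℕ) : ℤ) - d)

theorem total_matH (c : Coeffs m d) (K : Fin m → Fin (d + 1)) :
    total (matH d) c K = (wt K : ℂ) * c K := by
  rw [matH, total_diagonal]; simp [wt]

theorem EF_eq (c : Coeffs m d) : total (matE d) (total (matF d) c) =
    total (matF d) (total (matE d) c) + total (matH d) c := by
  rw [total_commutator, matE_matF_commutator]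

theorem matE_star (i j : Fin (d + 1)) : star (matE d i j) = matE d i j := by
  simp only [matE]; split_ifs <;> simp

theorem matF_star (i j : Fin (d + 1)) : star (matF d i j) = matF d i j := by
  simp only [matF]; split_ifs <;> simp

theorem pair_E (c φ : Coeffs m d) :
    pairing (omg d) (total (matE d) c) φ = pairing (omg d) c (total (matF d) φ) :=
  pairing_adjoint _ _ _ (omg_matF d) c φ

theorem pair_F (c φ : Coeffs m d) :
    pairing (omg d) (total (matF d) c) φ = pairing (omg d) c (total (matE d) φ) := by
  rw [pairing_comm, ← pair_E, pairing_comm]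

theorem qform_F (c : Coeffs m d) : (qform (omg d) (total (matF d) c) : ℂ) =
    pairing (omg d) (total (matE d) (total (matF d) c)) (star c) := by
  rw [← pairing_star, ← total_star _ matF_star, pair_E]

theorem qform_E (c : Coeffs m d) : (qform (omg d) (total (matE d) c) : ℂ) =
    pairing (omg d) (total (matF d) (total (matE d) c)) (star c) := by
  rw [← pairing_star, ← total_star _ matE_star, pair_F]

/-- Since `E` and `F` are adjoint, `E F c = 0` gives `‖F c‖² = 0`. -/
theorem F_eq_zero_of_EF {c : Coeffs m d} (h : total (matE d) (total (matF d) c) = 0) :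
    total (matF d) c = 0 := by
  apply eq_zero_of_qform (omg_pos d)
  have := qform_F c
  rw [h] at this
  simpa [pairing] using this

/-- On the weight space `2` the operator `E F = F E + 2` is positive definite, because
`⟨F E c, c⟩ = ‖E c‖² ≥ 0`; in particular it is injective. -/
theorem eq_zero_of_EF {c : Coeffs m d} (hH : total (matH d) c = (2 : ℂ) • c)
    (h : total (matE d) (total (matF d) c) = 0) : c = 0 := by
  apply eq_zero_of_qform (omg_pos d)
  have h1 := EF_eq c
  rw [h, hH] at h1
  have h2 : total (matF d) (total (matE d) c) = (-2 : ℂ) • c := by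
    rw [neg_smul]; exact eq_neg_of_add_eq_zero_left h1.symm
  have h3 := qform_E c
  have h4 : pairing (omg d) ((-2 : ℂ) • c) (star c) = -2 * pairing (omg d) c (star c) := by
    simp only [pairing, Finset.mul_sum]
    refine Finset.sum_congr rfl fun K _ => ?_
    simp only [Pi.smul_apply, smul_eq_mul]; ring
  rw [h2, h4, pairing_star] at h3
  have h5 : qform (omg d) (total (matE d) c) = -2 * qform (omg d) c := by exact_mod_cast h3
  have := qform_nonneg (omg_pos d) c
  have := qform_nonneg (omg_pos d) (total (matE d) c)
  linarith

/-- The functions supported on the multi-indices of weight `s`; equivalently the `s`-eigenspace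
of `H` (`mem_weightSpace_iff`). -/
def weightSpace (m d : ℕ) (s : ℤ) : Submodule ℂ (Coeffs m d) where
  carrier := {c | ∀ K, wt K ≠ s → c K = 0}
  add_mem' := fun ha hb K hK => by simp [ha K hK, hb K hK]
  zero_mem' := by simp
  smul_mem' := fun a c hc K hK => by simp [hc K hK]

theorem mem_weightSpace_iff (s : ℤ) (c : Coeffs m d) :
    c ∈ weightSpace m d s ↔ total (matH d) c = (s : ℂ) • c := by
  constructor
  · intro h; ext K
    rw [total_matH, Pi.smul_apply, smul_eq_mul]
    by_cases hK : wt K = s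
    · rw [hK]
    · rw [h K hK]; simp
  · intro h K hK
    have := congrFun h K
    rw [total_matH, Pi.smul_apply, smul_eq_mul] at this
    have h2 := sub_eq_zero.2 this
    rw [← sub_mul, mul_eq_zero, sub_eq_zero] at h2
    exact h2.resolve_left (by exact_mod_cast hK)

theorem wt_update (K : Fin m → Fin (d + 1)) (i : Fin m) (k : Fin (d + 1)) :
    wt (update K i k) = wt K + 2 * (k : ℕ) - 2 * (K i : ℕ) := by
  simp only [wt]
  rw [← Finset.add_sum_erase univ _ (mem_univ i),
    ← Finset.add_sum_erase univ (fun j => 2 * ((K j : ℕ) : ℤ) - d) (mem_univ i)]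
  have : ∑ j ∈ univ.erase i, (2 * ((update K i k j : ℕ) : ℤ) - d) =
      ∑ j ∈ univ.erase i, (2 * ((K j : ℕ) : ℤ) - d) :=
    Finset.sum_congr rfl fun j hj => by rw [update_of_ne (Finset.ne_of_mem_erase hj)]
  rw [this, update_self]; ring

theorem E_mem {s : ℤ} {c : Coeffs m d} (hc : c ∈ weightSpace m d s) :
    total (matE d) c ∈ weightSpace m d (s + 2) := by
  intro K hK
  rw [total_apply]
  refine Finset.sum_eq_zero fun i _ => ?_
  rw [slot_apply]
  refine Finset.sum_eq_zero fun k _ => ?_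
  by_cases h : (K i : ℕ) = k + 1
  · rw [hc, mul_zero]
    rw [wt_update, h]; intro h'; apply hK; push_cast at h'; linarith
  · simp [matE, h]

theorem F_mem {s : ℤ} {c : Coeffs m d} (hc : c ∈ weightSpace m d (s + 2)) :
    total (matF d) c ∈ weightSpace m d s := by
  intro K hK
  rw [total_apply]
  refine Finset.sum_eq_zero fun i _ => ?_
  rw [slot_apply]
  refine Finset.sum_eq_zero fun k _ => ?_
  by_cases h : (k : ℕ) = K i + 1
  · rw [hc, mul_zero]
    rw [wt_update, h]; intro h'; apply hK; push_cast at h'; linarith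
  · simp [matF, h]

/-- Restriction of a function in a weight space to its support. -/
def weightSpaceEquiv (m d : ℕ) (s : ℤ) :
    weightSpace m d s ≃ₗ[ℂ] ({K : Fin m → Fin (d + 1) // wt K = s} → ℂ) where
  toFun c K := c.1 K.1
  map_add' _ _ := rfl
  map_smul' _ _ := rfl
  invFun f := ⟨fun K => if h : wt K = s then f ⟨K, h⟩ else 0, fun K hK => by simp [hK]⟩
  left_inv c := by
    ext K
    by_cases h : wt K = s
    · simp [h]
    · simp [h, c.2 K h]
  right_inv f := by
    ext K; simp [K.2]

theorem finrank_weightSpace (m d : ℕ) (s : ℤ) :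
    Module.finrank ℂ (weightSpace m d s) =
      Fintype.card {K : Fin m → Fin (d + 1) // wt K = s} := by
  rw [(weightSpaceEquiv m d s).finrank_eq, Module.finrank_fintype_fun_eq_card]

/-- The `sl₂`-invariants: coefficient functions killed by `E` and `F`. -/
def annihilated (m d : ℕ) : Submodule ℂ (Coeffs m d) :=
  LinearMap.ker (total (matE d)) ⊓ LinearMap.ker (total (matF d))

/-- The `sl₂`-invariants are exactly the kernel of `E` on the weight space `0`. -/
theorem annihilated_eq : annihilated m d =
    (LinearMap.ker ((total (matE d)).domRestrict (weightSpace m d 0))).map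
      (weightSpace m d 0).subtype := by
  ext c
  simp only [annihilated, Submodule.mem_inf, LinearMap.mem_ker, Submodule.mem_map,
    Submodule.subtype_apply, Subtype.exists, LinearMap.domRestrict_apply]
  constructor
  · rintro ⟨hE, hF⟩
    refine ⟨c, ?_, hE, rfl⟩
    have := EF_eq c
    rw [hE, hF, map_zero, map_zero, zero_add] at this
    rw [mem_weightSpace_iff, ← this]; simp
  · rintro ⟨c', hc', hE, rfl⟩
    refine ⟨hE, F_eq_zero_of_EF ?_⟩
    rw [EF_eq, hE, (mem_weightSpace_iff 0 _).1 hc']; simp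

/-- `E` maps the weight space `0` onto the weight space `2`, since `E F` is invertible on the
latter; hence the kernel of `E` in weight `0` has dimension `dim W₀ - dim W₂`. -/
theorem finrank_annihilated : (Module.finrank ℂ (annihilated m d) : ℤ) =
    (Fintype.card {K : Fin m → Fin (d + 1) // wt K = 0} : ℤ) -
      Fintype.card {K : Fin m → Fin (d + 1) // wt K = 2} := by
  rw [annihilated_eq, Submodule.finrank_map_subtype_eq]
  have h := LinearMap.finrank_range_add_finrank_ker
    ((total (matE d)).domRestrict (weightSpace m d 0))
  have hr : LinearMap.range ((total (matE d)).domRestrict (weightSpace m d 0)) =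
      weightSpace m d 2 := by
    apply le_antisymm
    · rintro _ ⟨c, rfl⟩
      exact E_mem (s := 0) c.2
    · intro c hc
      -- `T` is `E F` on the weight space `2`; being injective it is surjective.
      let T : weightSpace m d 2 →ₗ[ℂ] weightSpace m d 2 :=
        ((total (matE d)).comp (total (matF d))).restrict
          (fun c hc => E_mem (s := 0) (F_mem (s := 0) hc))
      have hT : Function.Injective T := by
        rw [← LinearMap.ker_eq_bot, LinearMap.ker_eq_bot']
        rintro ⟨c, hc⟩ h0
        have h1 : total (matE d) (total (matF d) c) = 0 := congrArg Subtype.val h0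
        have := eq_zero_of_EF (by simpa using (mem_weightSpace_iff 2 c).1 hc) h1
        simpa using this
      obtain ⟨c', hc'⟩ := (LinearMap.injective_iff_surjective.1 hT) ⟨c, hc⟩
      exact ⟨⟨total (matF d) c'.1, F_mem (s := 0) c'.2⟩, congrArg Subtype.val hc'⟩
  rw [hr, finrank_weightSpace, finrank_weightSpace] at h
  rw [eq_sub_iff_add_eq, add_comm]
  exact_mod_cast h

end sl2

/-! ### Multilinear forms and infinitesimal invariance -/

section Forms
variable {m d : ℕ}

/-- The `m`-linear form `ξ ↦ Σ_K c_K ξ₁(K₁) ⋯ ξ_m(K_m)` with coefficients `c`. -/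
noncomputable def coeffForm (c : Coeffs m d) :
    MultilinearMap ℂ (fun _ : Fin m => (Fin (d + 1) → ℂ)) ℂ :=
  ∑ K, c K • (MultilinearMap.mkPiAlgebra ℂ (Fin m) ℂ).compLinearMap
    (fun i => LinearMap.proj (K i))

theorem coeffForm_apply (c : Coeffs m d) (ξ : Fin m → Fin (d + 1) → ℂ) :
    coeffForm c ξ = ∑ K, c K * ∏ i, ξ i (K i) := by
  simp [coeffForm]

theorem coeffForm_single (c : Coeffs m d) (K : Fin m → Fin (d + 1)) :
    coeffForm c (fun i => Pi.single (K i) 1) = c K := by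
  rw [coeffForm_apply, Finset.sum_eq_single K]
  · simp
  · intro L _ hL
    obtain ⟨i, hi⟩ := Function.ne_iff.1 hL
    rw [Finset.prod_eq_zero (mem_univ i) (by simp [hi]), mul_zero]
  · simp

/-- Every `m`-linear form is `coeffForm c` for a unique `c`. -/
noncomputable def formEquiv (m d : ℕ) : Coeffs m d ≃ₗ[ℂ]
    MultilinearMap ℂ (fun _ : Fin m => (Fin (d + 1) → ℂ)) ℂ where
  toFun := coeffForm
  map_add' c c' := by
    ext ξ; simp [coeffForm_apply, add_mul, Finset.sum_add_distrib]
  map_smul' a c := by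
    ext ξ; simp [coeffForm_apply, Finset.mul_sum, mul_assoc]
  invFun F K := F fun i => Pi.single (K i) 1
  left_inv c := by
    ext K; exact coeffForm_single c K
  right_inv F := by
    refine Module.Basis.ext_multilinear (fun _ => Pi.basisFun ℂ (Fin (d + 1))) fun K => ?_
    simp only [Pi.basisFun_apply]
    exact coeffForm_single _ K

/-- The normalized coefficient vector of the `d`-th power of the linear form
`v ↦ x.1 * v 0 + x.2 * v 1`. -/
def powVec (d : ℕ) (x : ℂ × ℂ) : Fin (d + 1) → ℂ :=
  fun k => x.1 ^ (k : ℕ) * x.2 ^ (d - (k : ℕ))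

theorem Pval_powVec (x : ℂ × ℂ) (v : Fin 2 → ℂ) :
    Pval d (powVec d x) v = (x.1 * v 0 + x.2 * v 1) ^ d := by
  rw [add_pow, ← Fin.sum_univ_eq_sum_range
    (fun k => (x.1 * v 0) ^ k * (x.2 * v 1) ^ (d - k) * (d.choose k : ℂ)) (d + 1)]
  refine Finset.sum_congr rfl fun k _ => ?_
  simp only [powVec, mul_pow]; ring

theorem powVec_linearIndependent (d : ℕ) :
    LinearIndependent ℂ (fun j : Fin (d + 1) => powVec d (((j : ℕ) : ℂ), 1)) := by
  have hdet : (Matrix.vandermonde (fun j : Fin (d + 1) => ((j : ℕ) : ℂ))).det ≠ 0 := by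
    rw [Matrix.det_vandermonde_ne_zero_iff]
    intro i j h
    exact Fin.ext (Nat.cast_injective (R := ℂ) h)
  have := Matrix.linearIndependent_rows_of_det_ne_zero hdet
  have he : (fun j : Fin (d + 1) => powVec d (((j : ℕ) : ℂ), 1)) =
      fun i => Matrix.vandermonde (fun j : Fin (d + 1) => ((j : ℕ) : ℂ)) i := by
    ext j k
    simp [powVec, Matrix.vandermonde_apply]
  rw [he]
  exact this

/-- The `d`-th powers of the linear forms `j v₀ + v₁`, `j = 0, ..., d`, are a basis of the binary
forms of degree `d`, by the Vandermonde determinant. -/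
noncomputable def powBasis (d : ℕ) : Module.Basis (Fin (d + 1)) ℂ (Fin (d + 1) → ℂ) :=
  basisOfLinearIndependentOfCardEqFinrank (powVec_linearIndependent d) (by simp)

theorem powBasis_apply (j : Fin (d + 1)) : powBasis d j = powVec d (((j : ℕ) : ℂ), 1) := by
  simp [powBasis]

/-- A multilinear form on binary forms is determined by its values on `d`-th powers of linear forms. -/
theorem form_ext {F F' : MultilinearMap ℂ (fun _ : Fin m => (Fin (d + 1) → ℂ)) ℂ}
    (h : ∀ x : Fin m → ℂ × ℂ, F (fun i => powVec d (x i)) = F' (fun i => powVec d (x i))) :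
    F = F' := by
  refine Module.Basis.ext_multilinear (fun _ => powBasis d) fun K => ?_
  simp only [powBasis_apply]
  exact h fun i => (((K i : ℕ) : ℂ), 1)

/-- The value of `coeffForm c` on the `d`-th powers of the linear forms `x i`. -/
noncomputable def evalPow (c : Coeffs m d) (x : Fin m → ℂ × ℂ) : ℂ :=
  ∑ K, c K * ∏ i, powVec d (x i) (K i)

theorem coeffForm_powVec (c : Coeffs m d) (x : Fin m → ℂ × ℂ) :
    coeffForm c (fun i => powVec d (x i)) = evalPow c x := coeffForm_apply _ _

theorem eq_zero_of_evalPow {c : Coeffs m d} (h : ∀ x, evalPow c x = 0) : c = 0 := by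
  apply (formEquiv m d).injective
  rw [map_zero]
  refine form_ext fun x => ?_
  exact (coeffForm_powVec c x).trans (h x)

theorem evalPow_total (A : Matrix (Fin (d + 1)) (Fin (d + 1)) ℂ) (c : Coeffs m d)
    (x : Fin m → ℂ × ℂ) : evalPow (total A c) x = ∑ K, c K * ∑ i,
      (∏ j ∈ univ.erase i, powVec d (x j) (K j)) *
        (A.transpose.mulVec (powVec d (x i))) (K i) := by
  simp only [evalPow, total_apply, Finset.sum_mul, Finset.mul_sum]
  rw [Finset.sum_comm,
    Finset.sum_comm (f := fun K i => c K *
      ((∏ j ∈ univ.erase i, powVec d (x j) (K j)) *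
        (A.transpose.mulVec (powVec d (x i))) (K i)))]
  refine Finset.sum_congr rfl fun i _ => ?_
  rw [slot_adjoint]
  refine Finset.sum_congr rfl fun K _ => ?_
  congr 1
  simp only [slot_apply, Matrix.mulVec, dotProduct, Finset.mul_sum]
  refine Finset.sum_congr rfl fun k _ => ?_
  rw [← Finset.mul_prod_erase univ _ (mem_univ i), update_self]
  have : ∏ j ∈ univ.erase i, powVec d (x j) (update K i k j) =
      ∏ j ∈ univ.erase i, powVec d (x j) (K j) :=
    Finset.prod_congr rfl fun j hj => by rw [update_of_ne (Finset.ne_of_mem_erase hj)]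
  rw [this]; ring

/-- If each power vector moves with velocity given by the transpose of `A`, then `evalPow c` changes
at the rate given by the derivation action of `A` on `c`. -/
theorem hasDerivAt_evalPow (A : Matrix (Fin (d + 1)) (Fin (d + 1)) ℂ) (c : Coeffs m d)
    (y : ℂ → Fin m → ℂ × ℂ) (t : ℂ)
    (hy : ∀ i k, HasDerivAt (fun s => powVec d (y s i) k)
      (A.transpose.mulVec (powVec d (y t i)) k) t) :
    HasDerivAt (fun s => evalPow c (y s)) (evalPow (total A c) (y t)) t := by
  rw [evalPow_total]
  refine HasDerivAt.fun_sum fun K _ => HasDerivAt.const_mul _ ?_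
  have := HasDerivAt.fun_finsetProd (u := univ) (f := fun i s => powVec d (y s i) (K i))
    (fun i _ => hy i (K i))
  simpa [smul_eq_mul] using this

/-- Transvection of the space of linear forms adding a multiple of the first coordinate to the second. -/
def shearU (t : ℂ) (x : ℂ × ℂ) : ℂ × ℂ := (x.1, x.2 + t * x.1)

/-- Transvection of the space of linear forms adding a multiple of the second coordinate to the first. -/
def shearL (t : ℂ) (x : ℂ × ℂ) : ℂ × ℂ := (x.1 + t * x.2, x.2)

theorem hasDerivAt_shearU (x : ℂ × ℂ) (t : ℂ) (k : Fin (d + 1)) :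
    HasDerivAt (fun s => powVec d (shearU s x) k)
      ((matE d).transpose.mulVec (powVec d (shearU t x)) k) t := by
  have h1 : HasDerivAt (fun s : ℂ => x.2 + s * x.1) x.1 t := by
    simpa using ((hasDerivAt_id t).mul_const x.1).const_add x.2
  have h2 := (h1.fun_pow (d - (k : ℕ))).const_mul (x.1 ^ (k : ℕ))
  refine h2.congr_deriv ?_
  symm
  simp only [Matrix.mulVec, dotProduct, Matrix.transpose_apply, matE, ite_mul, zero_mul, powVec,
    shearU]
  rw [sum_ite_val_succ]
  split_ifs with h
  · rw [Nat.cast_sub (by omega), show d - ((k : ℕ) + 1) = d - (k : ℕ) - 1 by omega, pow_succ]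
    ring
  · rw [show d - (k : ℕ) = 0 by omega]; simp

theorem hasDerivAt_shearL (x : ℂ × ℂ) (t : ℂ) (k : Fin (d + 1)) :
    HasDerivAt (fun s => powVec d (shearL s x) k)
      ((matF d).transpose.mulVec (powVec d (shearL t x)) k) t := by
  have h1 : HasDerivAt (fun s : ℂ => x.1 + s * x.2) x.2 t := by
    simpa using ((hasDerivAt_id t).mul_const x.2).const_add x.1
  have h2 := (h1.fun_pow (k : ℕ)).mul_const (x.2 ^ (d - (k : ℕ)))
  refine h2.congr_deriv ?_
  symm
  simp only [Matrix.mulVec, dotProduct, Matrix.transpose_apply, matF, ite_mul, zero_mul, powVec,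
    shearL]
  rw [sum_ite_succ_val]
  split_ifs with h
  · rw [show d - ((k : ℕ) - 1) = d - (k : ℕ) + 1 by omega, pow_succ]
    ring
  · rw [show (k : ℕ) = 0 by omega]; simp

/-- `E c = 0` if and only if the form with coefficients `c` is invariant under the one-parameter
group `shearU`. -/
theorem shearU_invariant_iff (c : Coeffs m d) : total (matE d) c = 0 ↔
    ∀ t x, evalPow c (fun i => shearU t (x i)) = evalPow c x := by
  have hd : ∀ (x : Fin m → ℂ × ℂ) (t : ℂ),
      HasDerivAt (fun s => evalPow c (fun i => shearU s (x i)))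
      (evalPow (total (matE d) c) (fun i => shearU t (x i))) t := fun x t =>
    hasDerivAt_evalPow (matE d) c (fun s i => shearU s (x i)) t
      (fun i k => hasDerivAt_shearU (x i) t k)
  constructor
  · intro h t x
    have := is_const_of_deriv_eq_zero (f := fun s => evalPow c (fun i => shearU s (x i)))
      (fun s => (hd x s).differentiableAt)
      (fun s => by rw [(hd x s).deriv, h]; simp [evalPow]) t 0
    simpa [shearU] using this
  · intro h
    refine eq_zero_of_evalPow fun x => ?_
    have h1 := hd x 0
    simp only [h] at h1
    simpa [shearU] using h1.unique (hasDerivAt_const _ _)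

/-- `F c = 0` if and only if the form with coefficients `c` is invariant under the one-parameter
group `shearL`. -/
theorem shearL_invariant_iff (c : Coeffs m d) : total (matF d) c = 0 ↔
    ∀ t x, evalPow c (fun i => shearL t (x i)) = evalPow c x := by
  have hd : ∀ (x : Fin m → ℂ × ℂ) (t : ℂ),
      HasDerivAt (fun s => evalPow c (fun i => shearL s (x i)))
      (evalPow (total (matF d) c) (fun i => shearL t (x i))) t := fun x t =>
    hasDerivAt_evalPow (matF d) c (fun s i => shearL s (x i)) t
      (fun i k => hasDerivAt_shearL (x i) t k)
  constructor
  · intro h t x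
    have := is_const_of_deriv_eq_zero (f := fun s => evalPow c (fun i => shearL s (x i)))
      (fun s => (hd x s).differentiableAt)
      (fun s => by rw [(hd x s).deriv, h]; simp [evalPow]) t 0
    simpa [shearL] using this
  · intro h
    refine eq_zero_of_evalPow fun x => ?_
    have h1 := hd x 0
    simp only [h] at h1
    simpa [shearL] using h1.unique (hasDerivAt_const _ _)

/-- The coefficient vector of the linear form `x ∘ g`, i.e. `gᵀ x`. -/
def trAct (g : Matrix (Fin 2) (Fin 2) ℂ) (x : ℂ × ℂ) : ℂ × ℂ :=
  (g 0 0 * x.1 + g 1 0 * x.2, g 0 1 * x.1 + g 1 1 * x.2)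

theorem Pval_trAct (g : Matrix (Fin 2) (Fin 2) ℂ) (x : ℂ × ℂ) (v : Fin 2 → ℂ) :
    Pval d (powVec d (trAct g x)) v = Pval d (powVec d x) (g.mulVec v) := by
  rw [Pval_powVec, Pval_powVec]
  congr 1
  simp [trAct, Matrix.mulVec, dotProduct, Fin.sum_univ_two]; ring

/-- The two families of transvections generate `SL(2, ℂ)`, so invariance under both implies
invariance under every matrix of determinant one. -/
theorem invariant_of_shears {X : Type*} (Ψ : (Fin m → ℂ × ℂ) → X)
    (hU : ∀ t x, Ψ (fun i => shearU t (x i)) = Ψ x)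
    (hL : ∀ t x, Ψ (fun i => shearL t (x i)) = Ψ x)
    (g : Matrix (Fin 2) (Fin 2) ℂ) (hg : g.det = 1) (x : Fin m → ℂ × ℂ) :
    Ψ (fun i => trAct g (x i)) = Ψ x := by
  rw [Matrix.det_fin_two] at hg
  -- If `q ≠ 0`, the matrix is a product of three shears.
  have main : ∀ p q r s : ℂ, p * s - q * r = 1 → q ≠ 0 → ∀ x : Fin m → ℂ × ℂ,
      Ψ (fun i => (p * (x i).1 + r * (x i).2, q * (x i).1 + s * (x i).2)) = Ψ x := by
    intro p q r s h hq x
    have h1 := hL ((p - 1) / q) (fun i => shearU q (shearL ((s - 1) / q) (x i)))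
    rw [hU q (fun i => shearL ((s - 1) / q) (x i)), hL ((s - 1) / q) x] at h1
    rw [← h1]
    congr 1
    ext i
    · simp only [shearL, shearU]
      field_simp
      linear_combination (-(x i).2) * h
    · simp only [shearL, shearU]
      field_simp
      ring
  by_cases hq : g 0 1 = 0
  · have hp : g 0 0 ≠ 0 := by
      intro h0; rw [hq, h0] at hg; simp at hg
    -- A further shear makes the entry in question nonzero.
    have h2 := hU 1 (fun i => trAct g (x i))
    rw [← h2]
    have := main (g 0 0) (g 0 1 + g 0 0) (g 1 0) (g 1 1 + g 1 0)
      (by linear_combination hg) (by rw [hq, zero_add]; exact hp) x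
    rw [← this]
    congr 1
    ext i
    · simp only [trAct, shearU]
    · simp only [trAct, shearU]; ring
  · exact main _ _ _ _ (by linear_combination hg) hq x

theorem Pval_add (ξ η : Fin (d + 1) → ℂ) (v : Fin 2 → ℂ) :
    Pval d (ξ + η) v = Pval d ξ v + Pval d η v := by
  simp only [Pval, ← Finset.sum_add_distrib]
  refine Finset.sum_congr rfl fun k _ => ?_
  simp only [Pi.add_apply]; ring

theorem Pval_smul (a : ℂ) (ξ : Fin (d + 1) → ℂ) (v : Fin 2 → ℂ) :
    Pval d (a • ξ) v = a * Pval d ξ v := by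
  simp only [Pval, Finset.mul_sum]
  refine Finset.sum_congr rfl fun k _ => ?_
  simp only [Pi.smul_apply, smul_eq_mul]; ring

/-- Evaluation of a binary form at `v`, as a linear functional of its coefficients. -/
noncomputable def PvalLin (d : ℕ) (v : Fin 2 → ℂ) : (Fin (d + 1) → ℂ) →ₗ[ℂ] ℂ where
  toFun ξ := Pval d ξ v
  map_add' ξ η := Pval_add ξ η v
  map_smul' a ξ := Pval_smul a ξ v

theorem Pval_injective {ξ η : Fin (d + 1) → ℂ} (h : ∀ v, Pval d ξ v = Pval d η v) : ξ = η := by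
  have hdet : (Matrix.vandermonde (fun j : Fin (d + 1) => ((j : ℕ) : ℂ))).det ≠ 0 := by
    rw [Matrix.det_vandermonde_ne_zero_iff]
    intro i j h
    exact Fin.ext (Nat.cast_injective (R := ℂ) h)
  have h0 : (fun k : Fin (d + 1) => (d.choose k : ℂ) * (ξ k - η k)) = 0 := by
    apply Matrix.eq_zero_of_mulVec_eq_zero hdet
    ext j
    have := h ![((j : ℕ) : ℂ), 1]
    rw [← sub_eq_zero] at this
    simp only [Pval, ← Finset.sum_sub_distrib] at this
    rw [Pi.zero_apply, ← this]
    simp only [Matrix.mulVec, dotProduct, Matrix.vandermonde_apply]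
    refine Finset.sum_congr rfl fun k _ => ?_
    simp; ring
  ext k
  have h1 := congrFun h0 k
  have p1 : ((d.choose k : ℕ) : ℂ) ≠ 0 := by
    exact_mod_cast (Nat.choose_pos (n := d) (k := k) (by omega)).ne'
  exact sub_eq_zero.1 ((mul_eq_zero.1 h1).resolve_left p1)

/-- The substitution `p ↦ p ∘ g` on coefficient vectors, defined on the basis of `d`-th powers. -/
noncomputable def substLin (d : ℕ) (g : Matrix (Fin 2) (Fin 2) ℂ) :
    (Fin (d + 1) → ℂ) →ₗ[ℂ] (Fin (d + 1) → ℂ) :=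
  (powBasis d).constr ℂ fun j => powVec d (trAct g (((j : ℕ) : ℂ), 1))

theorem Pval_substLin (g : Matrix (Fin 2) (Fin 2) ℂ) (ξ : Fin (d + 1) → ℂ) (v : Fin 2 → ℂ) :
    Pval d (substLin d g ξ) v = Pval d ξ (g.mulVec v) := by
  have : (PvalLin d v).comp (substLin d g) = PvalLin d (g.mulVec v) := by
    refine (powBasis d).ext fun j => ?_
    rw [LinearMap.comp_apply, substLin, Module.Basis.constr_basis, powBasis_apply]
    exact Pval_trAct _ _ _
  exact LinearMap.congr_fun this ξ

theorem substLin_powVec (g : Matrix (Fin 2) (Fin 2) ℂ) (x : ℂ × ℂ) :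
    substLin d g (powVec d x) = powVec d (trAct g x) :=
  Pval_injective fun v => by rw [Pval_substLin, Pval_trAct]

/-- Invariance of a multilinear form may be tested on `d`-th powers of linear forms. -/
theorem mem_invariantForms_iff (c : Coeffs m d) :
    coeffForm c ∈ invariantForms d m ↔
      ∀ g : Matrix.SpecialLinearGroup (Fin 2) ℂ, ∀ x : Fin m → ℂ × ℂ,
        evalPow c (fun i => trAct (g : Matrix (Fin 2) (Fin 2) ℂ) (x i)) = evalPow c x := by
  constructor
  · intro h g x
    have := h g⁻¹ (fun i => powVec d (x i)) (fun i => powVec d (trAct g (x i)))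
      (fun i v => by rw [Pval_trAct, inv_inv])
    rwa [coeffForm_powVec, coeffForm_powVec] at this
  · intro h g ξ η hξ
    have hη : η = fun i => substLin d (g⁻¹ : Matrix.SpecialLinearGroup (Fin 2) ℂ) (ξ i) := by
      ext1 i
      exact Pval_injective fun v => by rw [Pval_substLin, hξ]
    have hF : (coeffForm c).compLinearMap
        (fun _ => substLin d (g⁻¹ : Matrix.SpecialLinearGroup (Fin 2) ℂ)) = coeffForm c := by
      refine form_ext fun x => ?_
      rw [MultilinearMap.compLinearMap_apply]
      simp only [substLin_powVec]
      rw [coeffForm_powVec, coeffForm_powVec, h]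
    rw [hη]
    exact congrArg (fun F => F ξ) hF

theorem mem_invariantForms_iff_annihilated (c : Coeffs m d) :
    coeffForm c ∈ invariantForms d m ↔ c ∈ annihilated m d := by
  rw [mem_invariantForms_iff, annihilated, Submodule.mem_inf, LinearMap.mem_ker,
    LinearMap.mem_ker, shearU_invariant_iff, shearL_invariant_iff]
  constructor
  · intro h
    refine ⟨fun t x => ?_, fun t x => ?_⟩
    · have := h ⟨!![1, t; 0, 1], by simp [Matrix.det_fin_two]⟩ x
      simpa [trAct, shearU, add_comm] using this
    · have := h ⟨!![1, 0; t, 1], by simp [Matrix.det_fin_two]⟩ x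
      simpa [trAct, shearL, add_comm] using this
  · rintro ⟨hU, hL⟩ g x
    exact invariant_of_shears (evalPow c) hU hL g g.2 x

theorem finrank_invariantForms :
    Module.finrank ℂ (invariantForms d m) = Module.finrank ℂ (annihilated m d) := by
  have : invariantForms d m = (annihilated m d).map (formEquiv m d).toLinearMap := by
    ext F
    obtain ⟨c, rfl⟩ := (formEquiv m d).surjective F
    rw [Submodule.mem_map_equiv, LinearEquiv.symm_apply_apply]
    exact mem_invariantForms_iff_annihilated c
  rw [this, LinearEquiv.finrank_map_eq]

end Forms

/-! ### Counting weights by admissible sequences -/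

section Counting

/-- The number of sequences `K` leading from height `h` to height `0`, where an entry `k` changes
the height by `2k - d`. -/
def numWords (d m : ℕ) (h : ℤ) : ℤ :=
  Fintype.card {K : Fin m → Fin (d + 1) // h + wt K = 0}

/-- `Adm d m h K`: the path starting at height `h`, in which an entry `k` of `K` stands for `d - k`
down steps followed by `k` up steps, stays nonnegative during each of these `m` moves and ends at
height `0`. Only the lowest point of each move, `d - k` below its start, has to be tested. -/
def Adm (d : ℕ) : (m : ℕ) → ℤ → (Fin m → Fin (d + 1)) → Prop
  | 0, h, _ => h = 0
  | m + 1, h, K => (d : ℤ) - (K 0 : ℕ) ≤ h ∧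
      Adm d m (h + (2 * ((K 0 : ℕ) : ℤ) - d)) (Fin.tail K)

/-- The number of admissible sequences starting at height `h`. -/
noncomputable def numAdm (d m : ℕ) (h : ℤ) : ℤ :=
  Nat.card {K : Fin m → Fin (d + 1) // Adm d m h K}

/-- Counting sequences by their first entry. -/
theorem card_cons_split {d m : ℕ} (P : (Fin (m + 1) → Fin (d + 1)) → Prop) :
    (Nat.card {K // P K} : ℤ) =
      ∑ k : Fin (d + 1), (Nat.card {K : Fin m → Fin (d + 1) // P (Fin.cons k K)} : ℤ) := by
  classical
  have e : {K // P K} ≃ Σ k : Fin (d + 1), {K : Fin m → Fin (d + 1) // P (Fin.cons k K)} :=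
    { toFun := fun K => ⟨K.1 0, Fin.tail K.1, by rw [Fin.cons_self_tail]; exact K.2⟩
      invFun := fun x => ⟨Fin.cons x.1 x.2.1, x.2.2⟩
      left_inv := fun K => by simp
      right_inv := fun x => by rfl }
  rw [Nat.card_congr e, Nat.card_sigma]
  push_cast
  rfl

theorem wt_cons {d m : ℕ} (k : Fin (d + 1)) (K : Fin m → Fin (d + 1)) :
    wt (Fin.cons k K : Fin (m + 1) → Fin (d + 1)) = (2 * ((k : ℕ) : ℤ) - d) + wt K := by
  simp only [wt, Fin.sum_univ_succ, Fin.cons_zero, Fin.cons_succ]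

theorem numWords_zero (d : ℕ) (h : ℤ) : numWords d 0 h = if h = 0 then 1 else 0 := by
  simp only [numWords, wt, Finset.univ_eq_empty, Finset.sum_empty, add_zero]
  split_ifs with hh
  · simp [hh]
  · simp [hh]

theorem numWords_succ (d m : ℕ) (h : ℤ) : numWords d (m + 1) h =
    ∑ k ∈ range (d + 1), numWords d m (h + (2 * (k : ℤ) - d)) := by
  rw [← Fin.sum_univ_eq_sum_range (fun k => numWords d m (h + (2 * (k : ℤ) - d)))]
  simp only [numWords, ← Nat.card_eq_fintype_card]
  rw [card_cons_split]
  simp only [wt_cons, add_assoc]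

theorem numWords_neg (d m : ℕ) (h : ℤ) : numWords d m (-h) = numWords d m h := by
  induction m generalizing h with
  | zero => simp [numWords_zero]
  | succ m ih =>
    rw [numWords_succ, numWords_succ, ← Finset.sum_range_reflect]
    refine Finset.sum_congr rfl fun k hk => ?_
    rw [← ih]
    congr 1
    have : k ≤ d := by simpa [Nat.lt_succ_iff] using hk
    have h2 : ((d + 1 - 1 - k : ℕ) : ℤ) = d - k := by omega
    rw [h2]; ring

theorem numAdm_zero (d : ℕ) (h : ℤ) : numAdm d 0 h = if h = 0 then 1 else 0 := by
  simp only [numAdm, Adm]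
  split_ifs with hh
  · simp [hh]
  · simp [hh]

theorem numAdm_succ (d m : ℕ) (h : ℤ) : numAdm d (m + 1) h =
    ∑ k ∈ range (d + 1), if (d : ℤ) - k ≤ h then numAdm d m (h + (2 * (k : ℤ) - d)) else 0 := by
  rw [← Fin.sum_univ_eq_sum_range
    (fun k => if (d : ℤ) - k ≤ h then numAdm d m (h + (2 * (k : ℤ) - d)) else 0)]
  simp only [numAdm]
  rw [card_cons_split]
  refine Finset.sum_congr rfl fun k _ => ?_
  simp only [Adm, Fin.cons_zero, Fin.tail_cons]
  split_ifs with hk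
  · simp [hk]
  · simp [hk]

/-- A reflection principle. Put `b h = numWords h - numWords (h + 2)`. Both sides satisfy the same
recursion in `m`, except that the right-hand side also includes the entries `k` with `h < d - k`.
These contribute zero, because `b (-2 - h) = -b h` and `k ↦ d - h - 1 - k` permutes them while
sending the height `h + 2k - d` to its mirror image under `x ↦ -2 - x`. -/
theorem numAdm_eq (d m : ℕ) (h : ℤ) (hh : 0 ≤ h) :
    numAdm d m h = numWords d m h - numWords d m (h + 2) := by
  induction m generalizing h with
  | zero =>
    rw [numAdm_zero, numWords_zero, numWords_zero, if_neg (by omega : ¬ h + 2 = 0), sub_zero]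
  | succ m ih =>
    set b : ℤ → ℤ := fun h => numWords d m h - numWords d m (h + 2) with hb
    have hanti : ∀ h, b (-2 - h) = - b h := by
      intro h
      simp only [hb]
      rw [← numWords_neg, ← numWords_neg d m (-2 - h + 2)]
      rw [show -(-2 - h) = h + 2 by ring, show -(-2 - h + 2) = h by ring]; ring
    have h1 : numWords d (m + 1) h - numWords d (m + 1) (h + 2) =
        ∑ k ∈ range (d + 1), b (h + (2 * (k : ℤ) - d)) := by
      rw [numWords_succ, numWords_succ, ← Finset.sum_sub_distrib]
      refine Finset.sum_congr rfl fun k _ => ?_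
      simp only [hb]; congr 2; ring
    rw [h1, numAdm_succ]
    have h2 : ∀ k ∈ range (d + 1),
        (if (d : ℤ) - k ≤ h then numAdm d m (h + (2 * (k : ℤ) - d)) else 0) =
          b (h + (2 * (k : ℤ) - d)) -
            if (d : ℤ) - k ≤ h then 0 else b (h + (2 * (k : ℤ) - d)) := by
      intro k _
      split_ifs with hk
      · rw [ih _ (by omega)]; simp [hb]
      · simp
    rw [Finset.sum_congr rfl h2, Finset.sum_sub_distrib, sub_eq_self]
    obtain ⟨n, rfl⟩ := Int.eq_ofNat_of_zero_le hh
    have h3 : ∑ k ∈ range (d + 1),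
        (if (d : ℤ) - k ≤ (n : ℤ) then 0 else b (n + (2 * (k : ℤ) - d))) =
        ∑ k ∈ range (d - n), b (n + (2 * (k : ℤ) - d)) := by
      symm
      refine Finset.sum_subset_zero_on_sdiff ?_ ?_ ?_
      · intro k hk; simp only [Finset.mem_range] at *; omega
      · intro k hk
        simp only [Finset.mem_sdiff, Finset.mem_range] at hk
        rw [if_pos (by omega)]
      · intro k hk
        simp only [Finset.mem_range] at hk
        rw [if_neg (by omega)]
    rw [h3]
    -- Reversing the order of summation changes the sign, so the sum vanishes.
    have h4 : ∑ k ∈ range (d - n), b (n + (2 * (k : ℤ) - d)) =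
        - ∑ k ∈ range (d - n), b (n + (2 * (k : ℤ) - d)) := by
      conv_lhs => rw [← Finset.sum_range_reflect]
      rw [← Finset.sum_neg_distrib]
      refine Finset.sum_congr rfl fun k hk => ?_
      rw [← hanti]
      congr 1
      simp only [Finset.mem_range] at hk
      omega
    omega

theorem finrank_eq_numAdm (m d : ℕ) :
    Module.finrank ℂ (invariantForms d m) =
      Nat.card {K : Fin m → Fin (d + 1) // Adm d m 0 K} := by
  have h := finrank_annihilated (m := m) (d := d)
  have h2 := numAdm_eq d m 0 le_rfl
  rw [finrank_invariantForms]
  have e0 : numWords d m 0 = Fintype.card {K : Fin m → Fin (d + 1) // wt K = 0} := by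
    simp only [numWords, zero_add]
  have e2 : numWords d m (0 + 2) = Fintype.card {K : Fin m → Fin (d + 1) // wt K = 2} := by
    rw [← numWords_neg]
    simp only [numWords]
    norm_cast
    exact Fintype.card_congr (Equiv.subtypeEquivRight fun K => by omega)
  rw [e0, e2, ← h, numAdm] at h2
  exact_mod_cast h2.symm

end Counting

/-! ### From Dyck words to noncrossing pair partitions -/

section Words

/-- The height before position `p` of the lattice path of `s`, where `true` is an up step (the opening
end of an arc) and `false` a down step (the closing end). -/
def ht (s : ℕ → Bool) (p : ℕ) : ℤ := ∑ q ∈ range p, if s q then 1 else -1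

theorem ht_zero (s : ℕ → Bool) : ht s 0 = 0 := rfl

theorem ht_succ (s : ℕ → Bool) (p : ℕ) : ht s (p + 1) = ht s p + if s p then 1 else -1 :=
  Finset.sum_range_succ _ _

theorem ht_succ_of_true {s : ℕ → Bool} {p : ℕ} (h : s p = true) :
    ht s (p + 1) = ht s p + 1 := by rw [ht_succ, if_pos h]

theorem ht_succ_of_false {s : ℕ → Bool} {p : ℕ} (h : ¬ s p = true) :
    ht s (p + 1) = ht s p - 1 := by rw [ht_succ, if_neg h]; ring

/-- The level of the step at position `p`: the lower of the heights at its two ends. -/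
def lev (s : ℕ → Bool) (p : ℕ) : ℤ := min (ht s p) (ht s (p + 1))

theorem lev_of_true {s : ℕ → Bool} {p : ℕ} (h : s p = true) : lev s p = ht s p := by
  rw [lev, ht_succ_of_true h]; omega

theorem lev_of_false {s : ℕ → Bool} {p : ℕ} (h : ¬ s p = true) : lev s p = ht s (p + 1) := by
  rw [lev, ht_succ_of_false h]; omega

/-- Positions `i` and `j` are joined by an arc (or are equal): their steps have the same level, and the
path stays strictly above that level between them. -/
def ArcRel (s : ℕ → Bool) (i j : ℕ) : Prop :=
  lev s i = lev s j ∧ ∀ l, min i j < l → l ≤ max i j → lev s i < ht s l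

theorem ArcRel.refl (s : ℕ → Bool) (i : ℕ) : ArcRel s i i := ⟨rfl, fun l h1 h2 => by omega⟩

theorem ArcRel.symm {s : ℕ → Bool} {i j : ℕ} (h : ArcRel s i j) : ArcRel s j i :=
  ⟨h.1.symm, fun l h1 h2 => by rw [← h.1]; exact h.2 l (by omega) (by omega)⟩

theorem ArcRel.trans {s : ℕ → Bool} {i j k : ℕ} (h : ArcRel s i j) (h' : ArcRel s j k) :
    ArcRel s i k := by
  refine ⟨h.1.trans h'.1, fun l h1 h2 => ?_⟩
  by_cases hl : min i j < l ∧ l ≤ max i j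
  · exact h.2 l hl.1 hl.2
  · rw [h.1]; exact h'.2 l (by omega) (by omega)

/-- The first `n` steps of `s` form a path that stays nonnegative and returns to `0`. -/
def Dyck (s : ℕ → Bool) (n : ℕ) : Prop := (∀ p ≤ n, 0 ≤ ht s p) ∧ ht s n = 0

/-- An arc opens at its left end and closes at its right end. -/
theorem ArcRel.true_false {s : ℕ → Bool} {i j : ℕ} (h : ArcRel s i j) (hij : i < j) :
    s i = true ∧ ¬ s j = true := by
  constructor
  · by_contra hi
    have := h.2 (i + 1) (by omega) (by omega)
    rw [lev_of_false hi] at this; omega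
  · intro hj
    have := h.2 j (by omega) (by omega)
    rw [h.1, lev_of_true hj] at this; omega

theorem ArcRel.noncrossing {s : ℕ → Bool} {i i' j j' : ℕ}
    (h1 : i < i') (h2 : i' < j) (h3 : j < j') (h : ArcRel s i j) (h' : ArcRel s i' j') : False := by
  have a := h.true_false (by omega)
  have b := h'.true_false (by omega)
  have c := h.2 i' (by omega) (by omega)
  have e := h'.2 (j + 1) (by omega) (by omega)
  rw [lev_of_true b.1] at e
  have f := h.1
  rw [lev_of_false a.2] at f
  omega

theorem ArcRel.no_triple {s : ℕ → Bool} {i j k : ℕ} (h1 : i < j) (h2 : j < k)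
    (h : ArcRel s i j) (h' : ArcRel s j k) : False :=
  (h.true_false h1).2 (h'.true_false h2).1

/-- An up step is matched with the down step by which the path first returns to its starting height. -/
theorem exists_closer {s : ℕ → Bool} {n i : ℕ} (hs : Dyck s n) (hi : i < n) (h : s i = true) :
    ∃ j, i < j ∧ j < n ∧ ArcRel s i j := by
  have hex : ∃ l, i < l ∧ ht s l ≤ ht s i := ⟨n, hi, by rw [hs.2]; exact hs.1 i hi.le⟩
  classical
  obtain ⟨hl1, hl2⟩ := Nat.find_spec hex
  have hmin := fun l => Nat.find_min (H := hex) (m := l)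
  have hle : Nat.find hex ≤ n := Nat.find_min' hex ⟨hi, by rw [hs.2]; exact hs.1 i hi.le⟩
  generalize Nat.find hex = l at *
  obtain ⟨j, rfl⟩ : ∃ j, l = j + 1 := ⟨l - 1, by omega⟩
  have hji : j ≠ i := by
    rintro rfl
    rw [ht_succ_of_true h] at hl2; omega
  have hj : ht s i < ht s j := by
    by_contra hc
    exact hmin j (by omega) ⟨by omega, by omega⟩
  have hsj : ¬ s j = true := by
    intro hc
    rw [ht_succ_of_true hc] at hl2; omega
  have hlev := ht_succ_of_false hsj
  refine ⟨j, by omega, by omega, ?_, ?_⟩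
  · rw [lev_of_true h, lev_of_false hsj]; omega
  · intro l h1 h2
    rw [lev_of_true h]
    by_contra hc
    exact hmin l (by omega) ⟨by omega, by omega⟩

/-- A down step is matched with the last up step leaving the height to which it descends. -/
theorem exists_opener {s : ℕ → Bool} {n j : ℕ} (hs : Dyck s n) (hj : j < n) (h : ¬ s j = true) :
    ∃ i, i < j ∧ ArcRel s i j := by
  classical
  have h0 : ht s 0 ≤ ht s (j + 1) := by rw [ht_zero]; exact hs.1 _ hj
  have hspec := Nat.findGreatest_spec (P := fun l => ht s l ≤ ht s (j + 1)) (Nat.zero_le j) h0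
  have hmax := fun l => Nat.findGreatest_is_greatest (P := fun l => ht s l ≤ ht s (j + 1))
    (n := j) (k := l)
  have hle := Nat.findGreatest_le (P := fun l => ht s l ≤ ht s (j + 1)) j
  generalize Nat.findGreatest (fun l => ht s l ≤ ht s (j + 1)) j = i at *
  have h1 := ht_succ_of_false h
  have hij : i ≠ j := by rintro rfl; omega
  have h2 := hmax (i + 1) (by omega) (by omega)
  have hsi : s i = true := by
    by_contra hc
    rw [ht_succ_of_false hc] at h2; omega
  have h3 := ht_succ_of_true hsi
  refine ⟨i, by omega, ?_, ?_⟩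
  · rw [lev_of_true hsi, lev_of_false h]; omega
  · intro l hl1 hl2
    have := hmax l (by omega) (by omega)
    rw [lev_of_true hsi]; omega

theorem exists_partner {s : ℕ → Bool} {n i : ℕ} (hs : Dyck s n) (hi : i < n) :
    ∃ j, j ≠ i ∧ j < n ∧ ArcRel s i j := by
  by_cases h : s i = true
  · obtain ⟨j, h1, h2, h3⟩ := exists_closer hs hi h
    exact ⟨j, by omega, h2, h3⟩
  · obtain ⟨j, h1, h2⟩ := exists_opener hs hi h
    exact ⟨j, by omega, by omega, h2.symm⟩

/-- The equivalence relation `ArcRel` on the first `n` positions. -/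
def relSetoid (s : ℕ → Bool) (n : ℕ) : Setoid (Fin n) where
  r i j := ArcRel s i j
  iseqv := ⟨fun _ => ArcRel.refl _ _, ArcRel.symm, ArcRel.trans⟩

open Classical in
/-- The partition of the positions of a word into the arcs of its path. -/
noncomputable def wordPartition (s : ℕ → Bool) (n : ℕ) :
    Finpartition (Finset.univ : Finset (Fin n)) :=
  Finpartition.ofSetoid (relSetoid s n)

theorem sameBlock_iff_mem_part {n : ℕ} (π : Finpartition (Finset.univ : Finset (Fin n)))
    (i j : Fin n) : SameBlock π i j ↔ j ∈ π.part i := by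
  constructor
  · rintro ⟨B, hB, hi, hj⟩
    rwa [π.part_eq_of_mem hB hi]
  · intro h
    exact ⟨π.part i, π.part_mem.2 (mem_univ i), π.mem_part (mem_univ i), h⟩

theorem sameBlock_wordPartition (s : ℕ → Bool) (n : ℕ) (i j : Fin n) :
    SameBlock (wordPartition s n) i j ↔ ArcRel s i j := by
  classical
  rw [sameBlock_iff_mem_part, wordPartition, Finpartition.mem_part_ofSetoid_iff_rel]
  rfl

theorem wordPartition_noncrossing (s : ℕ → Bool) (n : ℕ) :
    IsNoncrossing (wordPartition s n) := by
  intro i i' j j' h1 h2 h3 h h'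
  rw [sameBlock_wordPartition] at h h'
  exact (ArcRel.noncrossing h1 h2 h3 h h').elim

theorem wordPartition_pair {s : ℕ → Bool} {n : ℕ} (hs : Dyck s n) :
    IsPairPartition (wordPartition s n) := by
  intro B hB
  obtain ⟨a, ha⟩ := (wordPartition s n).nonempty_of_mem_parts hB
  obtain ⟨b, hba, hbn, hab⟩ := exists_partner hs a.2
  rw [Finset.card_eq_two]
  refine ⟨a, ⟨b, hbn⟩, fun h => hba (congrArg Fin.val h).symm, ?_⟩
  ext c
  have hc : c ∈ B ↔ ArcRel s a c := by
    rw [← sameBlock_wordPartition s n, sameBlock_iff_mem_part,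
      (wordPartition s n).part_eq_of_mem hB ha]
  rw [hc]
  simp only [Finset.mem_insert, Finset.mem_singleton, Fin.ext_iff]
  constructor
  · intro hac
    by_contra hcon
    push Not at hcon
    have hbc := hab.symm.trans hac
    rcases lt_or_gt_of_ne hba with h1 | h1 <;> rcases lt_or_gt_of_ne hcon.1 with h2 | h2 <;>
      rcases lt_or_gt_of_ne hcon.2 with h3 | h3
    · exact ArcRel.no_triple h3 h1 hbc.symm hab.symm
    · exact ArcRel.no_triple h3 h2 hbc hac.symm
    · omega
    · exact ArcRel.no_triple h1 h2 hab.symm hac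
    · exact ArcRel.no_triple h2 h1 hac.symm hab
    · omega
    · exact ArcRel.no_triple h2 h3 hac hbc.symm
    · exact ArcRel.no_triple h1 h3 hab hbc
  · rintro (h | h)
    · rw [h]; exact ArcRel.refl _ _
    · rw [h]; exact hab

/-- If in each interval of length `d` the down steps precede the up steps, no arc has both ends in
the same interval. -/
theorem wordPartition_mpartite {s : ℕ → Bool} {n d : ℕ}
    (hs : ∀ p q, p < q → q < n → p / d = q / d → s p = true → s q = true) :
    IsMPartite d (wordPartition s n) := by
  intro B hB k
  rw [Finset.card_le_one]
  have key : ∀ a ∈ B, ∀ b ∈ B, (a : ℕ) / d = k → (b : ℕ) / d = k → ¬ a < b := by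
    intro a ha b hb hak hbk hab
    have hr : ArcRel s a b := (sameBlock_wordPartition s n a b).1 ⟨B, hB, ha, hb⟩
    have := hr.true_false hab
    exact this.2 (hs a b hab b.2 (hak.trans hbk.symm) this.1)
  intro a ha b hb
  rw [Finset.mem_filter] at ha hb
  exact le_antisymm (not_lt.1 (key b hb.1 a ha.1 hb.2 ha.2))
    (not_lt.1 (key a ha.1 b hb.1 ha.2 hb.2))

/-- A pair partition which refines another pair partition is equal to it. -/
theorem eq_of_sameBlock_imp {n : ℕ} {π π' : Finpartition (Finset.univ : Finset (Fin n))}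
    (hπ : IsPairPartition π) (hπ' : IsPairPartition π')
    (h : ∀ i j, SameBlock π i j → SameBlock π' i j) : π = π' := by
  have hpart : ∀ i, π.part i = π'.part i := by
    intro i
    refine Finset.eq_of_subset_of_card_le (fun j hj => ?_) ?_
    · exact (sameBlock_iff_mem_part _ _ _).1 (h i j ((sameBlock_iff_mem_part _ _ _).2 hj))
    · rw [hπ _ (π.part_mem.2 (mem_univ i)), hπ' _ (π'.part_mem.2 (mem_univ i))]
  ext B
  constructor
  · intro hB
    obtain ⟨a, ha⟩ := π.nonempty_of_mem_parts hB
    rw [← π.part_eq_of_mem hB ha, hpart]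
    exact π'.part_mem.2 (mem_univ a)
  · intro hB
    obtain ⟨a, ha⟩ := π'.nonempty_of_mem_parts hB
    rw [← π'.part_eq_of_mem hB ha, ← hpart]
    exact π.part_mem.2 (mem_univ a)

end Words

/-! ### From noncrossing pair partitions to Dyck words -/

section Matchings

theorem ht_sub (s : ℕ → Bool) {a b : ℕ} (hab : a ≤ b) : ht s b - ht s a =
    (#{p ∈ Ico a b | s p = true} : ℤ) - #{p ∈ Ico a b | ¬ s p = true} := by
  rw [ht, ht, ← Finset.sum_Ico_eq_sub _ hab, Finset.sum_ite]
  simp; ring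

variable {n : ℕ} {σ : ℕ → ℕ} {s : ℕ → Bool}

/-- Here, and in the lemmas below, `σ` is a fixed-point free involution of the first `n` positions and
`s` marks the smaller element of each pair by `true`. If every pair closing in `[a, b)` also opens
there, then `[a, b)` contains at least as many up steps as down steps. -/
theorem ht_le_of_closers (hinv : ∀ p < n, σ (σ p) = p) (hne : ∀ p < n, σ p ≠ p)
    (hlt : ∀ p < n, σ p < n) (hs : ∀ p < n, (s p = true ↔ p < σ p)) {a b : ℕ}
    (hab : a ≤ b) (hb : b ≤ n) (h : ∀ p, a ≤ p → p < b → σ p < p → a ≤ σ p) :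
    ht s a ≤ ht s b := by
  have h1 := ht_sub s hab
  have h2 : #{p ∈ Ico a b | ¬ s p = true} ≤ #{p ∈ Ico a b | s p = true} := by
    refine Finset.card_le_card_of_injOn σ ?_ ?_
    · intro p hp
      simp only [Finset.coe_filter, Finset.mem_Ico, Set.mem_ofPred_eq] at hp ⊢
      have hpn : p < n := by omega
      rw [hs p hpn] at hp
      have := hne p hpn
      have h3 := h p hp.1.1 hp.1.2 (by omega)
      rw [hs _ (hlt p hpn), hinv p hpn]
      omega
    · intro p hp q hq hpq
      simp only [Finset.coe_filter, Finset.mem_Ico, Set.mem_ofPred_eq] at hp hq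
      rw [← hinv p (by omega), hpq, hinv q (by omega)]
  omega

/-- If every pair opening in `[a, b)` also closes there, then `[a, b)` contains at least as many down
steps as up steps. -/
theorem ht_ge_of_openers (hinv : ∀ p < n, σ (σ p) = p)
    (hlt : ∀ p < n, σ p < n) (hs : ∀ p < n, (s p = true ↔ p < σ p)) {a b : ℕ}
    (hab : a ≤ b) (hb : b ≤ n) (h : ∀ p, a ≤ p → p < b → p < σ p → σ p < b) :
    ht s b ≤ ht s a := by
  have h1 := ht_sub s hab
  have h2 : #{p ∈ Ico a b | s p = true} ≤ #{p ∈ Ico a b | ¬ s p = true} := by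
    refine Finset.card_le_card_of_injOn σ ?_ ?_
    · intro p hp
      simp only [Finset.coe_filter, Finset.mem_Ico, Set.mem_ofPred_eq] at hp ⊢
      have hpn : p < n := by omega
      rw [hs p hpn] at hp
      have h3 := h p hp.1.1 hp.1.2 hp.2
      rw [hs _ (hlt p hpn), hinv p hpn]
      omega
    · intro p hp q hq hpq
      simp only [Finset.coe_filter, Finset.mem_Ico, Set.mem_ofPred_eq] at hp hq
      rw [← hinv p (by omega), hpq, hinv q (by omega)]
  omega

theorem dyck_of_matching (hinv : ∀ p < n, σ (σ p) = p) (hne : ∀ p < n, σ p ≠ p)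
    (hlt : ∀ p < n, σ p < n) (hs : ∀ p < n, (s p = true ↔ p < σ p)) : Dyck s n := by
  have h1 : ∀ p ≤ n, 0 ≤ ht s p := fun p hp =>
    ht_le_of_closers hinv hne hlt hs (Nat.zero_le p) hp fun _ _ _ _ => Nat.zero_le _
  refine ⟨h1, le_antisymm ?_ (h1 n le_rfl)⟩
  exact ht_ge_of_openers hinv hlt hs (Nat.zero_le n) le_rfl fun p _ hp _ => hlt p hp

/-- When the pairs of `σ` do not cross, `σ` is recovered from `s` as the arc relation: the positions
strictly between `p` and `σ p` are matched among themselves, so the path stays above the level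
of `p` there and returns to it. -/
theorem rel_of_matching (hinv : ∀ p < n, σ (σ p) = p) (hne : ∀ p < n, σ p ≠ p)
    (hlt : ∀ p < n, σ p < n) (hs : ∀ p < n, (s p = true ↔ p < σ p))
    (hnc : ∀ p q, p < q → q < σ p → σ p < σ q → σ q < n → False) {p : ℕ} (hp : p < n)
    (hpσ : p < σ p) : ArcRel s p (σ p) := by
  have hj := hlt p hp
  have hin : ∀ q, p < q → q < σ p → p < σ q ∧ σ q < σ p := by
    intro q h1 h2
    have hq : q < n := by omega
    have e1 : σ q ≠ p := by intro h; rw [← h, hinv q hq] at h2; omega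
    have e2 : σ q ≠ σ p := by
      intro h; have := hinv q hq; rw [h, hinv p hp] at this; omega
    constructor
    · by_contra hc
      exact hnc (σ q) p (by omega) (by rw [hinv q hq]; exact h1) (by rw [hinv q hq]; exact h2) hj
    · by_contra hc
      exact hnc p q h1 h2 (by omega) (hlt q hq)
  have sp : s p = true := (hs p hp).2 hpσ
  have sj : ¬ s (σ p) = true := by rw [hs _ hj, hinv p hp]; omega
  have hge : ∀ l, p + 1 ≤ l → l ≤ σ p → ht s (p + 1) ≤ ht s l := fun l h1 h2 =>
    ht_le_of_closers hinv hne hlt hs h1 (by omega) fun q hq1 hq2 _ =>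
      (hin q (by omega) (by omega)).1
  have hle : ht s (σ p) ≤ ht s (p + 1) :=
    ht_ge_of_openers hinv hlt hs (by omega) (by omega) fun q hq1 hq2 _ =>
      (hin q (by omega) (by omega)).2
  have hge' := hge (σ p) (by omega) le_rfl
  have e1 := ht_succ_of_true sp
  have e2 := ht_succ_of_false sj
  refine ⟨?_, fun l h1 h2 => ?_⟩
  · rw [lev_of_true sp, lev_of_false sj]; omega
  · rw [lev_of_true sp]
    have := hge l (by omega) (by omega)
    omega

/-- The properties used below of the involution exchanging the two elements of each block. -/
theorem exists_matching {d : ℕ} {π : Finpartition (Finset.univ : Finset (Fin n))}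
    (h1 : IsNoncrossing π) (h2 : IsPairPartition π) (h3 : IsMPartite d π) :
    ∃ σ : ℕ → ℕ, (∀ p < n, σ (σ p) = p) ∧ (∀ p < n, σ p ≠ p) ∧ (∀ p < n, σ p < n) ∧
      (∀ p q, p < q → q < σ p → σ p < σ q → σ q < n → False) ∧
      (∀ p < n, σ p / d ≠ p / d) ∧
      (∀ i j : Fin n, SameBlock π i j → j = i ∨ (j : ℕ) = σ i) := by
  have hex : ∀ i : Fin n, ∃ j, i ≠ j ∧ π.part i = {i, j} := by
    intro i
    obtain ⟨a, b, hab, hB⟩ := Finset.card_eq_two.1 (h2 _ (π.part_mem.2 (mem_univ i)))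
    have hi : i ∈ π.part i := π.mem_part (mem_univ i)
    rw [hB, Finset.mem_insert, Finset.mem_singleton] at hi
    rcases hi with rfl | rfl
    · exact ⟨b, hab, hB⟩
    · exact ⟨a, hab.symm, by rw [hB, Finset.pair_comm]⟩
  choose τ hτne hτ using hex
  have hsame : ∀ i j, SameBlock π i j ↔ j = i ∨ j = τ i := by
    intro i j
    rw [sameBlock_iff_mem_part, hτ, Finset.mem_insert, Finset.mem_singleton]
  have hsymm : ∀ i j, SameBlock π i j → SameBlock π j i := fun i j ⟨B, hB, hi, hj⟩ =>
    ⟨B, hB, hj, hi⟩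
  have hττ : ∀ i, τ (τ i) = i := by
    intro i
    have := (hsame (τ i) i).1 (hsymm _ _ ((hsame i (τ i)).2 (Or.inr rfl)))
    exact (this.resolve_left (hτne i)).symm
  refine ⟨fun p => if h : p < n then (τ ⟨p, h⟩ : ℕ) else p, ?_, ?_, ?_, ?_, ?_, ?_⟩
  · intro p hp; simp [hp, hττ]
  · intro p hp
    simp only [hp, dif_pos]
    intro h
    exact hτne ⟨p, hp⟩ (Fin.ext h.symm)
  · intro p hp; simp [hp]
  · intro p q hpq hq hpq' hn
    have hqn : q < n := by
      by_contra hc; simp only [dif_neg hc] at hn; exact hc hn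
    have hpn : p < n := by omega
    simp only [hpn, hqn, dif_pos] at hq hpq'
    have := h1 ⟨p, hpn⟩ ⟨q, hqn⟩ (τ ⟨p, hpn⟩) (τ ⟨q, hqn⟩) hpq hq hpq'
      ((hsame _ _).2 (Or.inr rfl)) ((hsame _ _).2 (Or.inr rfl))
    rcases (hsame _ _).1 this with h | h
    · have := congrArg Fin.val h; simp at this; omega
    · have := congrArg Fin.val h; simp at this; omega
  · intro p hp h
    simp only [hp, dif_pos] at h
    have hc := h3 _ (π.part_mem.2 (mem_univ ⟨p, hp⟩)) (p / d)
    rw [Finset.card_le_one] at hc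
    refine hτne ⟨p, hp⟩ (hc _ ?_ _ ?_)
    · rw [Finset.mem_filter, hτ]; simp
    · rw [Finset.mem_filter, hτ]; simp [h]
  · intro i j hij
    rcases (hsame i j).1 hij with h | h
    · exact Or.inl h
    · right; simp [h]

end Matchings

/-! ### Admissible sequences and m-partite partitions -/

section Bijection

/-- Extension by zero of a finite sequence to all of `ℕ`. -/
def ext0 {m d : ℕ} (K : Fin m → Fin (d + 1)) (j : ℕ) : ℕ :=
  if h : j < m then (K ⟨j, h⟩ : ℕ) else 0

theorem ext0_le {m d : ℕ} (K : Fin m → Fin (d + 1)) (j : ℕ) : ext0 K j ≤ d := by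
  unfold ext0; split_ifs <;> omega

/-- The height reached after the first `i` entries of `a`, starting from `0`. -/
def partialWt (d : ℕ) (a : ℕ → ℕ) (i : ℕ) : ℤ := ∑ j ∈ range i, (2 * (a j : ℤ) - d)

/-- The non-recursive form of admissibility. -/
theorem adm_iff {d : ℕ} : ∀ {m : ℕ} (h : ℤ) (K : Fin m → Fin (d + 1)), Adm d m h K ↔
    (∀ i < m, (d : ℤ) - ext0 K i ≤ h + partialWt d (ext0 K) i) ∧
      h + partialWt d (ext0 K) m = 0
  | 0, h, K => by simp [Adm, partialWt]
  | m + 1, h, K => by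
    have e0 : ext0 K 0 = K 0 := by simp [ext0]
    have es : ∀ j, ext0 K (j + 1) = ext0 (Fin.tail K) j := by
      intro j; simp only [ext0, Fin.tail, Nat.add_lt_add_iff_right]; rfl
    have ep : ∀ i, partialWt d (ext0 K) (i + 1) =
        partialWt d (ext0 (Fin.tail K)) i + (2 * ((K 0 : ℕ) : ℤ) - d) := by
      intro i
      simp only [partialWt]
      rw [Finset.sum_range_succ', e0]
      simp only [es]
    rw [Adm, adm_iff, ep]
    constructor
    · rintro ⟨h1, h2, h3⟩
      refine ⟨fun i hi => ?_, by omega⟩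
      cases i with
      | zero => simpa [e0, partialWt] using h1
      | succ i =>
        have := h2 i (by omega)
        rw [es, ep]; omega
    · rintro ⟨h1, h2⟩
      refine ⟨?_, fun i hi => ?_, by omega⟩
      · simpa [e0, partialWt] using h1 0 (by omega)
      · have := h1 (i + 1) (by omega)
        rw [es, ep] at this; omega

/-- The word whose `i`-th interval of length `d` consists of `d - a i` down steps followed by `a i`
up steps. -/
def word (d : ℕ) (a : ℕ → ℕ) (p : ℕ) : Bool := decide (d ≤ p % d + a (p / d))

theorem word_add {d : ℕ} (a : ℕ → ℕ) (i : ℕ) {r : ℕ} (hr : r < d) :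
    word d a (i * d + r) = true ↔ d ≤ r + a i := by
  have h1 : (i * d + r) % d = r := by rw [Nat.add_comm, Nat.add_mul_mod_self_right, Nat.mod_eq_of_lt hr]
  have h2 : (i * d + r) / d = i := by
    rw [mul_comm, Nat.mul_add_div (by omega), Nat.div_eq_of_lt hr, add_zero]
  simp only [word, h1, h2, decide_eq_true_eq]

/-- Inside the `i`-th interval the path descends for `d - a i` steps and ascends afterwards, so its
height is the maximum of two linear functions of `r`. -/
theorem ht_word {d : ℕ} {a : ℕ → ℕ} (ha : ∀ j, a j ≤ d) (i : ℕ) : ∀ r ≤ d,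
    ht (word d a) (i * d + r) =
      partialWt d a i + max (-(r : ℤ)) ((r : ℤ) - 2 * ((d : ℤ) - a i)) := by
  have step : ∀ i, ht (word d a) (i * d) = partialWt d a i → ∀ r ≤ d,
      ht (word d a) (i * d + r) =
        partialWt d a i + max (-(r : ℤ)) ((r : ℤ) - 2 * ((d : ℤ) - a i)) := by
    intro i hi r
    have := ha i
    induction r with
    | zero => intro _; rw [add_zero, hi]; push_cast; omega
    | succ r ih =>
      intro hr
      have ih := ih (by omega)
      rw [← add_assoc]
      by_cases hw : word d a (i * d + r) = true
      · rw [ht_succ_of_true hw, ih]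
        rw [word_add a i (by omega)] at hw
        push_cast; omega
      · rw [ht_succ_of_false hw, ih]
        rw [word_add a i (by omega)] at hw
        push_cast; omega
  have hall : ∀ i, ht (word d a) (i * d) = partialWt d a i := by
    intro i
    induction i with
    | zero => simp [ht_zero, partialWt]
    | succ i ih =>
      have h1 := step i ih d le_rfl
      have := ha i
      rw [Nat.succ_mul, h1, partialWt, partialWt, Finset.sum_range_succ]
      omega
  exact step i (hall i)

theorem ht_word_mul {d : ℕ} {a : ℕ → ℕ} (ha : ∀ j, a j ≤ d) (i : ℕ) :
    ht (word d a) (i * d) = partialWt d a i := by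
  have := ht_word ha i 0 (Nat.zero_le d)
  have h2 := ha i
  rw [add_zero] at this
  rw [this]; push_cast; omega

theorem adm_iff_dyck {m d : ℕ} (hd : 1 ≤ d) (K : Fin m → Fin (d + 1)) :
    Adm d m 0 K ↔ Dyck (word d (ext0 K)) (m * d) := by
  rw [adm_iff, Dyck, ht_word_mul (ext0_le K)]
  simp only [zero_add]
  refine and_congr_left fun hend => ?_
  constructor
  · intro h p hp
    have hr := Nat.mod_lt p hd
    have hp' : p / d * d + p % d = p := Nat.div_add_mod' p d
    rw [← hp', ht_word (ext0_le K) _ _ hr.le]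
    rcases Nat.lt_or_ge (p / d) m with hi | hi
    · have := h _ hi
      have := ext0_le K (p / d)
      omega
    · have h1 : m * d ≤ p / d * d := Nat.mul_le_mul_right d hi
      have h2 : p / d * d = m * d := by omega
      have h3 : p / d = m := Nat.eq_of_mul_eq_mul_right hd h2
      have h4 : p % d = 0 := by omega
      rw [h3, hend, h4]; omega
  · intro h i hi
    have h0 := ext0_le K i
    have h1 : i * d + d ≤ m * d := by
      rw [← Nat.succ_mul]; exact Nat.mul_le_mul_right d hi
    have := h (i * d + (d - ext0 K i)) (by omega)
    rw [ht_word (ext0_le K) i _ (by omega)] at this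
    omega

theorem word_closers_first {d : ℕ} (a : ℕ → ℕ) (p q : ℕ) (hpq : p < q) (h : p / d = q / d)
    (hp : word d a p = true) : word d a q = true := by
  simp only [word, decide_eq_true_eq] at *
  have h1 := Nat.div_add_mod p d
  have h2 := Nat.div_add_mod q d
  rw [h] at h1 hp
  omega

/-- A monotone Boolean sequence of length `d` is determined by its number of `true` entries. -/
theorem mono_iff_card {d : ℕ} (P : ℕ → Bool)
    (hP : ∀ r, r + 1 < d → P r = true → P (r + 1) = true) {r : ℕ} (hr : r < d) :
    P r = true ↔ d ≤ r + #{q ∈ range d | P q = true} := by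
  have hmono : ∀ q, r ≤ q → q < d → P r = true → P q = true := by
    intro q hq
    induction q, hq using Nat.le_induction with
    | base => intro _ h; exact h
    | succ q hq ih => intro h1 h2; exact hP q h1 (ih (by omega) h2)
  constructor
  · intro h
    have : Ico r d ⊆ {q ∈ range d | P q = true} := by
      intro q hq
      simp only [Finset.mem_Ico, Finset.mem_filter, Finset.mem_range] at *
      exact ⟨hq.2, hmono q hq.1 hq.2 h⟩
    have := Finset.card_le_card this
    rw [Nat.card_Ico] at this; omega
  · intro h
    by_contra hc
    -- Otherwise all `true` entries lie strictly after `r`.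
    have hmono' : ∀ q, q ≤ r → P q = true → False := by
      intro q hq hPq
      apply hc
      clear hmono h hc
      induction r, hq using Nat.le_induction with
      | base => exact hPq
      | succ r hq ih => exact hP r hr (ih (by omega))
    have : ({q ∈ range d | P q = true} : Finset ℕ) ⊆ Ico (r + 1) d := by
      intro q hq
      simp only [Finset.mem_Ico, Finset.mem_filter, Finset.mem_range] at *
      refine ⟨?_, hq.1⟩
      by_contra hcon
      exact hmono' q (by omega) hq.2
    have := Finset.card_le_card this
    rw [Nat.card_Ico] at this; omega

theorem word_injective {m d : ℕ} {K K' : Fin m → Fin (d + 1)}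
    (h : ∀ p < m * d, (word d (ext0 K) p = true ↔ word d (ext0 K') p = true)) : K = K' := by
  ext i
  have h1 : (i : ℕ) * d + d ≤ m * d := by
    rw [← Nat.succ_mul]; exact Nat.mul_le_mul_right d i.2
  have key : ∀ r < d, (d ≤ r + (K i : ℕ) ↔ d ≤ r + (K' i : ℕ)) := by
    intro r hr
    have := h (i * d + r) (by omega)
    rw [word_add _ _ hr, word_add _ _ hr] at this
    simpa [ext0] using this
  by_contra hne
  rcases lt_or_gt_of_ne hne with hlt | hlt
  · have := key (d - (K' i : ℕ)) (by omega); omega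
  · have := key (d - (K i : ℕ)) (by omega); omega

/-- The `m`-partite noncrossing pair partition of the arcs of the word of an admissible sequence. -/
noncomputable def toPartition {m d : ℕ} (hd : 1 ≤ d)
    (K : {K : Fin m → Fin (d + 1) // Adm d m 0 K}) :
    {π : Finpartition (Finset.univ : Finset (Fin (m * d))) //
        IsNoncrossing π ∧ IsPairPartition π ∧ IsMPartite d π} :=
  ⟨wordPartition (word d (ext0 K.1)) (m * d), wordPartition_noncrossing _ _,
    wordPartition_pair ((adm_iff_dyck hd K.1).1 K.2),
    wordPartition_mpartite fun p q h1 _ h3 h4 => word_closers_first _ p q h1 h3 h4⟩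

theorem toPartition_injective {m d : ℕ} (hd : 1 ≤ d) :
    Function.Injective (toPartition (m := m) hd) := by
  have key : ∀ K K' : {K : Fin m → Fin (d + 1) // Adm d m 0 K},
      toPartition hd K = toPartition hd K' → ∀ p < m * d,
        word d (ext0 K.1) p = true → word d (ext0 K'.1) p = true := by
    intro K K' h p hp hw
    obtain ⟨j, h1, h2, h3⟩ := exists_closer ((adm_iff_dyck hd K.1).1 K.2) hp hw
    have h4 := (sameBlock_wordPartition _ (m * d) ⟨p, hp⟩ ⟨j, h2⟩).2 h3
    have h5 : wordPartition (word d (ext0 K.1)) (m * d) =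
        wordPartition (word d (ext0 K'.1)) (m * d) := congrArg Subtype.val h
    rw [h5, sameBlock_wordPartition] at h4
    exact (h4.true_false h1).1
  intro K K' h
  exact Subtype.ext (word_injective fun p hp => ⟨key K K' h p hp, key K' K h.symm p hp⟩)

/-- The preimage of `π` lists the numbers of opening elements in the intervals. In a noncrossing
`m`-partite pair partition no opener is directly followed, within its interval, by a closer: the two
would either be paired with each other or belong to crossing pairs. Hence openers come last in each
interval, and the word of this sequence is the opener-closer word of `π`. -/
theorem toPartition_surjective {m d : ℕ} (hd : 1 ≤ d) :
    Function.Surjective (toPartition (m := m) hd) := by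
  rintro ⟨π, h1, h2, h3⟩
  obtain ⟨σ, hinv, hne, hlt, hnc, hmp, hsame⟩ := exists_matching h1 h2 h3
  let K : Fin m → Fin (d + 1) := fun i =>
    ⟨#{r ∈ range d | decide ((i : ℕ) * d + r < σ (i * d + r)) = true}, by
      have := Finset.card_filter_le (range d)
        (fun r => decide ((i : ℕ) * d + r < σ (i * d + r)) = true)
      rw [Finset.card_range] at this
      omega⟩
  have hs : ∀ p < m * d, (word d (ext0 K) p = true ↔ p < σ p) := by
    intro p hp
    have hr := Nat.mod_lt p hd
    have hi : p / d < m := Nat.div_lt_of_lt_mul (by rwa [mul_comm])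
    have hp' : p / d * d + p % d = p := Nat.div_add_mod' p d
    have h1 : p / d * d + d ≤ m * d := by
      rw [← Nat.succ_mul]; exact Nat.mul_le_mul_right d hi
    generalize p / d = i at *
    generalize p % d = r at *
    subst hp'
    rw [word_add _ _ hr]
    have hK : ext0 K i = #{r ∈ range d | decide (i * d + r < σ (i * d + r)) = true} := by
      simp [ext0, hi, K]
    rw [hK, ← mono_iff_card (fun r => decide (i * d + r < σ (i * d + r))) ?_ hr,
      decide_eq_true_eq]
    intro r hr' hop
    rw [decide_eq_true_eq] at hop ⊢
    have hd1 : (i * d + r) / d = i := by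
      rw [mul_comm, Nat.mul_add_div (by omega), Nat.div_eq_of_lt (by omega), add_zero]
    have hd2 : (i * d + (r + 1)) / d = i := by
      rw [mul_comm, Nat.mul_add_div (by omega), Nat.div_eq_of_lt (by omega), add_zero]
    rw [← add_assoc] at hd2 ⊢
    have hq : i * d + r + 1 < m * d := by omega
    generalize i * d + r = q at *
    by_contra hc
    have e1 := hne (q + 1) hq
    have e2 : σ q ≠ q + 1 := by
      intro h; apply hmp q (by omega); rw [h, hd1, hd2]
    have e3 : σ (q + 1) ≠ q := by
      intro h; apply hmp (q + 1) (by omega); rw [h, hd1, hd2]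
    -- `q` opens and `q + 1` closes, so the pairs `σ (q + 1) < q + 1` and `q < σ q` cross.
    exact hnc (σ (q + 1)) q (by omega) (by rw [hinv _ hq]; omega) (by rw [hinv _ hq]; omega)
      (hlt q (by omega))
  have hdyck := dyck_of_matching hinv hne hlt hs
  refine ⟨⟨K, (adm_iff_dyck hd K).2 hdyck⟩, ?_⟩
  -- Both are pair partitions, so it suffices that the blocks of `π` are arcs.
  refine Subtype.ext (eq_of_sameBlock_imp h2 (wordPartition_pair hdyck) fun i j hij => ?_).symm
  rw [sameBlock_wordPartition]
  rcases hsame i j hij with h | h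
  · rw [h]; exact ArcRel.refl _ _
  · rw [h]
    rcases lt_or_gt_of_ne (hne i i.2) with hc | hc
    · have := rel_of_matching hinv hne hlt hs hnc (hlt i i.2) (by rw [hinv i i.2]; exact hc)
      rw [hinv i i.2] at this
      exact this.symm
    · exact rel_of_matching hinv hne hlt hs hnc i.2 hc

end Bijection

/-- The dimension of the space `T^m(R_d^*)^G` of `SL(2,ℂ)`-invariant `m`-linear forms on
binary forms of degree `d` equals the number of `m`-partite noncrossing pair partitions
of `{1, ..., md}`. -/
theorem dim_invariants_eq_card_noncrossing (m d : ℕ) (hm : 1 ≤ m) (hd : 1 ≤ d) :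
    Module.finrank ℂ (invariantForms d m) =
      Nat.card {π : Finpartition (Finset.univ : Finset (Fin (m * d))) //
        IsNoncrossing π ∧ IsPairPartition π ∧ IsMPartite d π} := by
  rw [finrank_eq_numAdm]
  exact Nat.card_eq_of_bijective (toPartition hd)
    ⟨toPartition_injective hd, toPartition_surjective hd⟩
end

section
/- For every m ≥ 0 and d ≥ 1, the number of m-partite noncrossing pair partitions of {1, ..., md} (with respect to the consecutive intervals of length d) equals (2/π) ∫₀^π (sin((d+1)x)/sin x)^m · sin²x dx. -/
open Finset

/-! ### Noncrossing perfect matchings and lattice paths -/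

/-- `r i j` (with `i < j`) is the arc relation of a noncrossing perfect matching of
`{0, ..., n - 1}`: every point is the endpoint of exactly one arc and no two arcs cross. -/
structure IsArcs (n : ℕ) (r : ℕ → ℕ → Prop) : Prop where
  lt : ∀ {i j}, r i j → i < j
  lt_n : ∀ {i j}, r i j → j < n
  total : ∀ i, i < n → ∃ j, r i j ∨ r j i
  right_unique : ∀ {i j j'}, r i j → r i j' → j = j'
  left_unique : ∀ {i i' j}, r i j → r i' j → i = i'
  not_chain : ∀ {i j k}, r i j → ¬ r j k
  noncrossing : ∀ {i j k l}, r i k → r j l → i < j → j < k → ¬ k < l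

/-- The point `i` is matched with `j` under the path with heights `H`: step `i` goes up from
height `H i`, and step `j` is the first later step to return to that height. -/
def PathArc (H : ℕ → ℕ) (i j : ℕ) : Prop :=
  i < j ∧ H i = H (j + 1) ∧ ∀ k, i < k → k ≤ j → H i < H k

open Classical in
/-- The left endpoints of the arcs that pass over the gap between the points `k - 1` and `k`. -/
noncomputable def openSet (n : ℕ) (r : ℕ → ℕ → Prop) (k : ℕ) : Finset ℕ :=
  (range n).filter (fun i => ∃ j, r i j ∧ i < k ∧ k ≤ j)

/-- The number of arcs that pass over the gap between the points `k - 1` and `k`. -/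
noncomputable def height (n : ℕ) (r : ℕ → ℕ → Prop) (k : ℕ) : ℕ := (openSet n r k).card

namespace PathArc
variable {H : ℕ → ℕ} {i i' j j' k : ℕ}

lemma right_unique (h : PathArc H i j) (h' : PathArc H i j') : j = j' := by
  obtain ⟨a, b, c⟩ := h
  obtain ⟨a', b', c'⟩ := h'
  rcases lt_trichotomy j j' with hl | hl | hl
  · have := c' (j + 1) (by omega) (by omega); omega
  · exact hl
  · have := c (j' + 1) (by omega) (by omega); omega

lemma left_unique (h : PathArc H i j) (h' : PathArc H i' j) : i = i' := by
  obtain ⟨a, b, c⟩ := h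
  obtain ⟨a', b', c'⟩ := h'
  rcases lt_trichotomy i i' with hl | hl | hl
  · have := c i' (by omega) (by omega); omega
  · exact hl
  · have := c' i (by omega) (by omega); omega

lemma not_chain (h : PathArc H i j) : ¬ PathArc H j k := by
  rintro ⟨a', b', c'⟩
  obtain ⟨a, b, c⟩ := h
  have := c j (by omega) (by omega)
  have := c' (j + 1) (by omega) (by omega)
  omega

lemma noncrossing (h : PathArc H i j) (h' : PathArc H i' j') (h1 : i < i') (h2 : i' < j) :
    ¬ j < j' := by
  intro h3
  have := h.2.2 i' h1 h2.le
  have := h'.2.2 (j + 1) (by omega) (by omega)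
  have := h.2.1
  omega

end PathArc

/-- `H` is the height function of a Dyck path with `n` steps; nonnegativity is built into the
codomain `ℕ`, and values beyond `n` are unconstrained. -/
structure IsPath (n : ℕ) (H : ℕ → ℕ) : Prop where
  zero : H 0 = 0
  last : H n = 0
  step : ∀ k, k < n → H (k + 1) = H k + 1 ∨ H k = H (k + 1) + 1

lemma IsPath.exists_right {n : ℕ} {H : ℕ → ℕ} (hH : IsPath n H) {i : ℕ} (hi : i < n)
    (hup : H (i + 1) = H i + 1) : ∃ j, PathArc H i j ∧ j < n := by
  classical
  have hex : ∃ j, i < j ∧ H (j + 1) ≤ H i := by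
    refine ⟨n - 1, ?_, ?_⟩
    · by_contra hcon
      have : i + 1 = n := by omega
      have := hH.last
      simp_all
    · rw [show n - 1 + 1 = n by omega, hH.last]; omega
  obtain ⟨hj1, hj2⟩ := Nat.find_spec hex
  have hmin := fun k (hk : k < Nat.find hex) => Nat.find_min hex hk
  have hle : Nat.find hex ≤ n - 1 := by
    apply Nat.find_min'
    refine ⟨?_, ?_⟩
    · by_contra hcon
      have : i + 1 = n := by omega
      have := hH.last
      simp_all
    · rw [show n - 1 + 1 = n by omega, hH.last]; omega
  generalize Nat.find hex = j at *
  have hgt : ∀ k, i < k → k ≤ j → H i < H k := by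
    intro k hk1 hk2
    rcases eq_or_lt_of_le (Nat.succ_le_of_lt hk1) with h | h
    · subst h; simp only [Nat.succ_eq_add_one]; omega
    · have := hmin (k - 1) (by omega)
      rw [show k - 1 + 1 = k by omega] at this
      by_contra hc
      exact this ⟨by omega, by omega⟩
  refine ⟨j, ⟨hj1, ?_, hgt⟩, by omega⟩
  have := hgt j hj1 le_rfl
  have := hH.step j (by omega)
  omega

lemma IsPath.exists_left {n : ℕ} {H : ℕ → ℕ} (hH : IsPath n H) {j : ℕ} (hj : j < n)
    (hdown : H j = H (j + 1) + 1) : ∃ i, PathArc H i j := by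
  classical
  have h0 : H 0 ≤ H (j + 1) := by rw [hH.zero]; omega
  have hspec := Nat.findGreatest_spec (P := fun i => H i ≤ H (j + 1)) (Nat.zero_le j) h0
  have hle := Nat.findGreatest_le (P := fun i => H i ≤ H (j + 1)) j
  have hmax := fun k (hk : Nat.findGreatest (fun i => H i ≤ H (j + 1)) j < k) (hk' : k ≤ j) =>
    Nat.findGreatest_is_greatest hk hk'
  generalize Nat.findGreatest (fun i => H i ≤ H (j + 1)) j = i at *
  have hij : i < j := by
    rcases hle.lt_or_eq with h | h
    · exact h
    · subst h; omega
  have heq : H i = H (j + 1) := by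
    have h1 := hmax (i + 1) (by omega) (by omega)
    have h2 := hH.step i (by omega)
    omega
  refine ⟨i, hij, heq, fun k hk hk' => ?_⟩
  have := hmax k hk hk'
  omega

lemma IsPath.isArcs {n : ℕ} {H : ℕ → ℕ} (hH : IsPath n H) :
    IsArcs n (fun i j => PathArc H i j ∧ j < n) where
  lt h := h.1.1
  lt_n h := h.2
  total i hi := by
    rcases hH.step i hi with h | h
    · obtain ⟨j, hj⟩ := hH.exists_right hi h
      exact ⟨j, Or.inl hj⟩
    · obtain ⟨j, hj⟩ := hH.exists_left hi h
      exact ⟨j, Or.inr ⟨hj, hi⟩⟩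
  right_unique h h' := h.1.right_unique h'.1
  left_unique h h' := h.1.left_unique h'.1
  not_chain h h' := h.1.not_chain h'.1
  noncrossing h h' := h.1.noncrossing h'.1

namespace IsArcs
variable {n : ℕ} {r : ℕ → ℕ → Prop} {i j k : ℕ}

lemma mem_openSet (hr : IsArcs n r) : i ∈ openSet n r k ↔ ∃ j, r i j ∧ i < k ∧ k ≤ j := by
  simp only [openSet, mem_filter, mem_range, and_iff_right_iff_imp]
  rintro ⟨j, h, -, -⟩
  exact (hr.lt h).trans (hr.lt_n h)

lemma height_zero (hr : IsArcs n r) : height n r 0 = 0 := by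
  rw [height, card_eq_zero, eq_empty_iff_forall_notMem]
  intro i hi
  obtain ⟨j, -, h, -⟩ := hr.mem_openSet.1 hi
  omega

lemma height_of_le (hr : IsArcs n r) (hk : n ≤ k) : height n r k = 0 := by
  rw [height, card_eq_zero, eq_empty_iff_forall_notMem]
  intro i hi
  obtain ⟨j, h, -, h'⟩ := hr.mem_openSet.1 hi
  have := hr.lt_n h
  omega

lemma height_up (hr : IsArcs n r) (h : r i j) : height n r (i + 1) = height n r i + 1 := by
  have hlt := hr.lt h
  have : openSet n r (i + 1) = insert i (openSet n r i) := by
    ext a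
    simp only [mem_insert, hr.mem_openSet]
    constructor
    · rintro ⟨b, hab, h1, h2⟩
      by_cases ha : a = i
      · exact Or.inl ha
      · exact Or.inr ⟨b, hab, by omega, by omega⟩
    · rintro (rfl | ⟨b, hab, h1, h2⟩)
      · exact ⟨j, h, by omega, by omega⟩
      · refine ⟨b, hab, by omega, ?_⟩
        have : b ≠ i := by rintro rfl; exact hr.not_chain hab h
        omega
  rw [height, this, card_insert_of_notMem, height]
  rw [hr.mem_openSet]
  rintro ⟨b, -, h1, -⟩
  omega

lemma height_down (hr : IsArcs n r) (h : r i j) : height n r j = height n r (j + 1) + 1 := by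
  have hlt := hr.lt h
  have : openSet n r j = insert i (openSet n r (j + 1)) := by
    ext a
    simp only [mem_insert, hr.mem_openSet]
    constructor
    · rintro ⟨b, hab, h1, h2⟩
      by_cases ha : a = i
      · exact Or.inl ha
      · refine Or.inr ⟨b, hab, by omega, ?_⟩
        have : b ≠ j := by rintro rfl; exact ha (hr.left_unique hab h)
        omega
    · rintro (rfl | ⟨b, hab, h1, h2⟩)
      · exact ⟨j, h, by omega, by omega⟩
      · refine ⟨b, hab, ?_, by omega⟩
        have : a ≠ j := by rintro rfl; exact hr.not_chain h hab
        omega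
  rw [height, this, card_insert_of_notMem, height]
  rw [hr.mem_openSet]
  rintro ⟨b, hb, h1, h2⟩
  have := hr.right_unique h hb
  omega

lemma isPath (hr : IsArcs n r) : IsPath n (height n r) where
  zero := hr.height_zero
  last := hr.height_of_le le_rfl
  step k hk := by
    obtain ⟨j, h | h⟩ := hr.total k hk
    · exact Or.inl (hr.height_up h)
    · exact Or.inr (hr.height_down h)

/-- The arcs over the gaps strictly inside an arc `(i, j)` include those over the gap before `i`
and `(i, j)` itself, because an arc over that gap cannot cross `(i, j)`. -/
lemma pathArc (hr : IsArcs n r) (h : r i j) : PathArc (height n r) i j := by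
  have hlt := hr.lt h
  have key : ∀ a b, r a b → a < i → i ≤ b → j < b := by
    intro a b hab h1 h2
    have h3 : b ≠ i := by rintro rfl; exact hr.not_chain hab h
    have h4 : b ≠ j := by rintro rfl; exact h1.ne (hr.left_unique hab h)
    have h5 := hr.noncrossing hab h h1 (by omega)
    omega
  refine ⟨hlt, ?_, ?_⟩
  · unfold height
    congr 1
    ext a
    simp only [hr.mem_openSet]
    constructor
    · rintro ⟨b, hab, h1, h2⟩
      have := key a b hab h1 h2
      exact ⟨b, hab, by omega, by omega⟩
    · rintro ⟨b, hab, h1, h2⟩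
      have h3 : a ≠ i := by rintro rfl; have := hr.right_unique h hab; omega
      have h4 : a ≠ j := by rintro rfl; exact hr.not_chain h hab
      refine ⟨b, hab, ?_, by omega⟩
      by_contra hc
      exact hr.noncrossing h hab (by omega) (by omega) (by omega)
  · intro k hk hk'
    apply card_lt_card
    rw [Finset.ssubset_iff_of_subset]
    · refine ⟨i, hr.mem_openSet.2 ⟨j, h, hk, hk'⟩, ?_⟩
      rw [hr.mem_openSet]
      rintro ⟨b, -, h1, -⟩
      omega
    · intro a ha
      obtain ⟨b, hab, h1, h2⟩ := hr.mem_openSet.1 ha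
      have := key a b hab h1 h2
      exact hr.mem_openSet.2 ⟨b, hab, by omega, by omega⟩

/-- A noncrossing matching can be recovered from its height function. -/
lemma iff_pathArc (hr : IsArcs n r) : r i j ↔ PathArc (height n r) i j ∧ j < n := by
  refine ⟨fun h => ⟨hr.pathArc h, hr.lt_n h⟩, fun ⟨h, hj⟩ => ?_⟩
  obtain ⟨j', h' | h'⟩ := hr.total i (h.1.trans hj)
  · rwa [h.right_unique (hr.pathArc h')]
  · exact absurd h (hr.pathArc h').not_chain

end IsArcs

/-- The matching induced by a Dyck path has this path as its height function. -/
lemma IsPath.height_eq {n : ℕ} {H : ℕ → ℕ} (hH : IsPath n H) :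
    ∀ k, k ≤ n → height n (fun i j => PathArc H i j ∧ j < n) k = H k := by
  intro k
  induction k with
  | zero => intro _; rw [hH.isArcs.height_zero, hH.zero]
  | succ k ih =>
    intro hk
    have ih := ih (by omega)
    have hs := hH.step k hk
    obtain ⟨j, h | h⟩ := hH.isArcs.total k hk
    · have := hH.isArcs.height_up h
      have := h.1.2.2 (k + 1) (by omega) h.1.1
      omega
    · have := hH.isArcs.height_down h
      have := h.1.2.2 k h.1.1 le_rfl
      have := h.1.2.1
      omega

/-! ### Multipartite matchings and heights at interval boundaries -/

/-- No arc joins two points of the same interval of length `d`. -/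
def ArcsPartite (d : ℕ) (r : ℕ → ℕ → Prop) : Prop := ∀ i j, r i j → i / d ≠ j / d

/-- On each interval the height function of a multipartite matching goes down `k` times and then
up `d - k` times: an up step directly followed by a down step would be an arc inside the
interval. -/
lemma IsArcs.valley {m d : ℕ} (hd : 1 ≤ d) {r : ℕ → ℕ → Prop} (hr : IsArcs (m * d) r)
    (hp : ArcsPartite d r) {t : ℕ} (ht : t < m) :
    ∃ k ≤ d, ∀ s ≤ d,
      height (m * d) r (t * d + s) + 2 * min s k = height (m * d) r (t * d) + s := by
  have hmd : t * d + d ≤ m * d := by nlinarith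
  have hstep := hr.isPath.step
  have harc : ∀ {i j}, PathArc (height (m * d) r) i j → j < m * d → r i j :=
    fun h h' => hr.iff_pathArc.2 ⟨h, h'⟩
  generalize height (m * d) r = H at *
  suffices h : ∀ s₀ ≤ d, ∃ k ≤ s₀, ∀ s ≤ s₀, H (t * d + s) + 2 * min s k = H (t * d) + s from
    h d le_rfl
  intro s₀
  induction s₀ with
  | zero => exact fun _ => ⟨0, le_rfl, fun s hs => by simp [Nat.le_zero.1 hs]⟩
  | succ s₀ ih =>
    intro hs₀
    obtain ⟨k, hk, hform⟩ := ih (by omega)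
    have h0 := hform s₀ le_rfl
    rcases hstep (t * d + s₀) (by omega) with h | h
    · refine ⟨k, by omega, fun s hs => ?_⟩
      rcases hs.lt_or_eq with hs | rfl
      · exact hform s (by omega)
      · rw [← add_assoc, h]; omega
    -- A down step at `s₀` is possible only if all steps before it in the interval went down.
    · have hks : k = s₀ := by
        by_contra hne
        have h1 := hform (s₀ - 1) (by omega)
        have e : t * d + s₀ = t * d + (s₀ - 1) + 1 := by omega
        have harc' : PathArc H (t * d + (s₀ - 1)) (t * d + s₀) := by
          refine ⟨by omega, by omega, fun l hl hl' => ?_⟩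
          rw [show l = t * d + s₀ by omega]
          omega
        refine hp _ _ (harc harc' (by omega)) ?_
        rw [mul_comm t d, Nat.mul_add_div (by omega), Nat.mul_add_div (by omega),
          Nat.div_eq_of_lt (by omega : s₀ < d), Nat.div_eq_of_lt (by omega : s₀ - 1 < d)]
      refine ⟨s₀ + 1, le_rfl, fun s hs => ?_⟩
      rcases hs.lt_or_eq with hs | rfl
      · have := hform s (by omega); omega
      · rw [← add_assoc]; omega

/-- The sequences of heights at interval boundaries: they start at `a`, each of the first `m`
steps goes from height `h` to `h + d - 2k` with `k ≤ min h d`, and they vanish from index `m` on.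
The last clause both fixes the end height `0` and makes the values beyond `m` irrelevant. -/
def heightSeqs (d m a : ℕ) : Set (ℕ → ℕ) :=
  {h | h 0 = a ∧ (∀ t < m, ∃ k ≤ d, k ≤ h t ∧ h (t + 1) + 2 * k = h t + d) ∧ ∀ t, m ≤ t → h t = 0}

lemma IsArcs.mem_heightSeqs {m d : ℕ} (hd : 1 ≤ d) {r : ℕ → ℕ → Prop} (hr : IsArcs (m * d) r)
    (hp : ArcsPartite d r) : (fun t => height (m * d) r (t * d)) ∈ heightSeqs d m 0 := by
  refine ⟨by simp [hr.height_zero], fun t ht => ?_, fun t ht => ?_⟩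
  · obtain ⟨k, hk, hform⟩ := hr.valley hd hp ht
    refine ⟨k, hk, ?_, ?_⟩
    · have := hform k hk
      simp only
      omega
    · have := hform d le_rfl
      simp only [Nat.succ_mul]
      omega
  · exact hr.height_of_le (Nat.mul_le_mul_right d ht)

lemma arcs_injective {m d : ℕ} (hd : 1 ≤ d) {r r' : ℕ → ℕ → Prop} (hr : IsArcs (m * d) r)
    (hp : ArcsPartite d r) (hr' : IsArcs (m * d) r') (hp' : ArcsPartite d r')
    (h : ∀ t, height (m * d) r (t * d) = height (m * d) r' (t * d)) : r = r' := by
  have hH : height (m * d) r = height (m * d) r' := by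
    funext x
    rcases lt_or_ge x (m * d) with hx | hx
    · have ht : x / d < m := (Nat.div_lt_iff_lt_mul hd).2 hx
      obtain ⟨k, hk, hf⟩ := hr.valley hd hp ht
      obtain ⟨k', hk', hf'⟩ := hr'.valley hd hp' ht
      have hs : x % d ≤ d := (Nat.mod_lt x hd).le
      have e : x / d * d + x % d = x := Nat.div_add_mod' x d
      have h1 := hf _ hs
      have h2 := hf' _ hs
      have h3 := hf _ le_rfl
      have h4 := hf' _ le_rfl
      have h5 := h (x / d)
      have h6 := h (x / d + 1)
      rw [Nat.succ_mul] at h6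
      rw [e] at h1 h2
      obtain rfl : k = k' := by omega
      omega
    · rw [hr.height_of_le hx, hr'.height_of_le hx]
  funext i j
  rw [eq_iff_iff, hr.iff_pathArc, hr'.iff_pathArc, hH]

lemma arcs_surjective {m d : ℕ} (hd : 1 ≤ d) {h : ℕ → ℕ} (hh : h ∈ heightSeqs d m 0) :
    ∃ r, IsArcs (m * d) r ∧ ArcsPartite d r ∧ ∀ t, height (m * d) r (t * d) = h t := by
  obtain ⟨h0, hchain, hend⟩ := hh
  choose! k hkd hkh hk using hchain
  -- Fill in each interval by the valley with `k t` down steps followed by `d - k t` up steps.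
  set H : ℕ → ℕ := fun x => h (x / d) + x % d - 2 * min (x % d) (k (x / d)) with hHdef
  have hHt : ∀ t, H (t * d) = h t := by
    intro t
    simp [hHdef, Nat.mul_div_cancel _ hd]
  have hform : ∀ t < m, ∀ s ≤ d, H (t * d + s) + 2 * min s (k t) = h t + s := by
    intro t ht s hs
    have := hkh t ht
    rcases hs.lt_or_eq with hs | rfl
    · have e1 : (t * d + s) / d = t := by
        rw [mul_comm t d, Nat.mul_add_div (by omega), Nat.div_eq_of_lt hs, add_zero]
      have e2 : (t * d + s) % d = s := by
        rw [mul_comm t d, Nat.mul_add_mod, Nat.mod_eq_of_lt hs]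
      simp only [hHdef, e1, e2]
      omega
    · rw [← Nat.succ_mul, hHt]
      have := hk t ht
      have := hkd t ht
      simp only [Nat.succ_eq_add_one]
      omega
  clear_value H
  have hpath : IsPath (m * d) H := by
    refine ⟨by simpa [h0] using hHt 0, by rw [hHt, hend m le_rfl], fun x hx => ?_⟩
    have ht : x / d < m := (Nat.div_lt_iff_lt_mul hd).2 hx
    have hs : x % d < d := Nat.mod_lt x hd
    have e : x / d * d + x % d = x := Nat.div_add_mod' x d
    have h1 := hform _ ht _ hs.le
    have h2 := hform _ ht (x % d + 1) hs
    rw [← add_assoc] at h2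
    rw [e] at h1 h2
    omega
  refine ⟨_, hpath.isArcs, ?_, fun t => ?_⟩
  · rintro i j ⟨hij, hj⟩ he
    have ht : j / d < m := (Nat.div_lt_iff_lt_mul hd).2 hj
    have hsi : i % d < d := Nat.mod_lt i hd
    have hsj : j % d < d := Nat.mod_lt j hd
    have ei : j / d * d + i % d = i := by rw [← he]; exact Nat.div_add_mod' i d
    have ej : j / d * d + j % d = j := Nat.div_add_mod' j d
    have i1 := hform _ ht _ hsi.le
    have i2 := hform _ ht (i % d + 1) hsi
    have j1 := hform _ ht _ hsj.le
    have j2 := hform _ ht (j % d + 1) hsj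
    rw [← add_assoc] at i2 j2
    rw [ei] at i1 i2
    rw [ej] at j1 j2
    have := hij.1
    have := hij.2.1
    have := hij.2.2 (i + 1) (by omega) (by omega)
    have := hij.2.2 j (by omega) le_rfl
    omega
  · rcases lt_or_ge t m with ht | ht
    · rw [hpath.height_eq _ (Nat.mul_le_mul_right d ht.le), hHt]
    · rw [hpath.isArcs.height_of_le (Nat.mul_le_mul_right d ht), hend t ht]

/-! ### From set partitions to matchings -/

section Partitions
variable {n : ℕ} {π π' : Finpartition (Finset.univ : Finset (Fin n))} {i j k : Fin n}

lemma sameBlock_iff : SameBlock π i j ↔ i ∈ π.part j := π.mem_part_iff_exists.symm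

lemma SameBlock.symm (h : SameBlock π i j) : SameBlock π j i := by
  obtain ⟨B, hB, h1, h2⟩ := h
  exact ⟨B, hB, h2, h1⟩

lemma SameBlock.mem (h : SameBlock π i j) {B : Finset (Fin n)} (hB : B ∈ π.parts) (hi : i ∈ B) :
    j ∈ B := by
  obtain ⟨B', hB', h1, h2⟩ := h
  rwa [π.eq_of_mem_parts hB hB' hi h1]

lemma finpartition_ext (h : ∀ i j, SameBlock π i j ↔ SameBlock π' i j) : π = π' := by
  have hpart : ∀ j, π.part j = π'.part j := by
    intro j
    ext i
    rw [← sameBlock_iff, ← sameBlock_iff, h]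
  ext B
  constructor
  · intro hB
    obtain ⟨a, ha⟩ := π.nonempty_of_mem_parts hB
    rw [← π.part_eq_of_mem hB ha, hpart, Finpartition.part_mem]
    exact mem_univ a
  · intro hB
    obtain ⟨a, ha⟩ := π'.nonempty_of_mem_parts hB
    rw [← π'.part_eq_of_mem hB ha, ← hpart, Finpartition.part_mem]
    exact mem_univ a

lemma IsPairPartition.unique (hπ : IsPairPartition π) (h : SameBlock π i j) (h' : SameBlock π i k)
    (hij : i ≠ j) (hik : i ≠ k) : j = k := by
  obtain ⟨B, hB, hi, hj⟩ := h
  have hk := h'.mem hB hi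
  by_contra hjk
  have hsub : ({i, j, k} : Finset (Fin n)) ⊆ B := by
    intro x hx
    simp only [mem_insert, mem_singleton] at hx
    rcases hx with rfl | rfl | rfl <;> assumption
  have := card_le_card hsub
  rw [hπ B hB, card_eq_three.2 ⟨i, j, k, hij, hik, hjk, rfl⟩] at this
  omega

lemma IsPairPartition.exists_partner (hπ : IsPairPartition π) (i : Fin n) :
    ∃ j, j ≠ i ∧ SameBlock π i j := by
  obtain ⟨B, hB, hi⟩ := π.exists_mem (mem_univ i)
  obtain ⟨j, hj, hji⟩ := exists_mem_ne (by rw [hπ B hB]; omega : 1 < B.card) i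
  exact ⟨j, hji, B, hB, hi, hj⟩

/-- The pairs `i < j` of points in a common block, as a relation on natural numbers. -/
def arcs (π : Finpartition (Finset.univ : Finset (Fin n))) (i j : ℕ) : Prop :=
  ∃ (hi : i < n) (hj : j < n), i < j ∧ SameBlock π ⟨i, hi⟩ ⟨j, hj⟩

lemma isArcs_arcs (hnc : IsNoncrossing π) (hπ : IsPairPartition π) : IsArcs n (arcs π) where
  lt := fun ⟨_, _, h, _⟩ => h
  lt_n := fun ⟨_, h, _, _⟩ => h
  total i hi := by
    obtain ⟨j, hji, h⟩ := hπ.exists_partner ⟨i, hi⟩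
    have hne : (j : ℕ) ≠ i := fun e => hji (Fin.ext e)
    rcases lt_or_gt_of_ne hne with hlt | hlt
    · exact ⟨j, Or.inr ⟨j.2, hi, hlt, h.symm⟩⟩
    · exact ⟨j, Or.inl ⟨hi, j.2, hlt, h⟩⟩
  right_unique := by
    rintro i j j' ⟨hi, hj, hlt, h⟩ ⟨_, hj', hlt', h'⟩
    have := hπ.unique h h' (by simp; omega) (by simp; omega)
    simpa using this
  left_unique := by
    rintro i i' j ⟨hi, hj, hlt, h⟩ ⟨hi', _, hlt', h'⟩
    have := hπ.unique h.symm h'.symm (by simp; omega) (by simp; omega)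
    simpa using this
  not_chain := by
    rintro i j k ⟨hi, hj, hlt, h⟩ ⟨_, hk, hlt', h'⟩
    have := hπ.unique h.symm h' (by simp; omega) (by simp; omega)
    simp only [Fin.mk.injEq] at this
    omega
  noncrossing := by
    rintro i i' j j' ⟨hi, hj, hlt, h⟩ ⟨hi', hj', hlt', h'⟩ h1 h2 h3
    have hs := hnc ⟨i, hi⟩ ⟨i', hi'⟩ ⟨j, hj⟩ ⟨j', hj'⟩ h1 h2 h3 h h'
    have := hπ.unique h hs (by simp; omega) (by simp; omega)
    simp only [Fin.mk.injEq] at this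
    omega

lemma arcsPartite_arcs {d : ℕ} (hp : IsMPartite d π) : ArcsPartite d (arcs π) := by
  rintro i j ⟨hi, hj, hlt, B, hB, h1, h2⟩ he
  have := card_le_one.1 (hp B hB (j / d)) ⟨i, hi⟩ (by simp [h1, he]) ⟨j, hj⟩ (by simp [h2])
  simp only [Fin.mk.injEq] at this
  omega

lemma sameBlock_iff_arcs : SameBlock π i j ↔ i = j ∨ arcs π i j ∨ arcs π j i := by
  constructor
  · intro h
    rcases lt_trichotomy i j with hlt | hlt | hlt
    · exact Or.inr (Or.inl ⟨i.2, j.2, hlt, h⟩)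
    · exact Or.inl hlt
    · exact Or.inr (Or.inr ⟨j.2, i.2, hlt, h.symm⟩)
  · rintro (rfl | ⟨_, _, _, h⟩ | ⟨_, _, _, h⟩)
    · obtain ⟨B, hB, hi⟩ := π.exists_mem (mem_univ i)
      exact ⟨B, hB, hi, hi⟩
    · exact h
    · exact h.symm

lemma arcs_inj (h : arcs π = arcs π') : π = π' :=
  finpartition_ext fun i j => by rw [sameBlock_iff_arcs, sameBlock_iff_arcs, h]

lemma IsArcs.exists_partition {d : ℕ} {r : ℕ → ℕ → Prop} (hr : IsArcs n r)
    (hp : ArcsPartite d r) : ∃ π : Finpartition (Finset.univ : Finset (Fin n)),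
      (IsNoncrossing π ∧ IsPairPartition π ∧ IsMPartite d π) ∧ arcs π = r := by
  classical
  let s : Setoid (Fin n) :=
    { r := fun i j => i = j ∨ r i j ∨ r j i
      iseqv :=
        { refl := fun i => Or.inl rfl
          symm := by
            rintro i j (h | h | h)
            · exact Or.inl h.symm
            · exact Or.inr (Or.inr h)
            · exact Or.inr (Or.inl h)
          trans := by
            rintro i j k (rfl | h | h) (rfl | h' | h')
            · exact Or.inl rfl
            · exact Or.inr (Or.inl h')
            · exact Or.inr (Or.inr h')
            · exact Or.inr (Or.inl h)
            · exact absurd h' (hr.not_chain h)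
            · exact Or.inl (Fin.ext (hr.left_unique h h'))
            · exact Or.inr (Or.inr h)
            · exact Or.inl (Fin.ext (hr.right_unique h h'))
            · exact absurd h (hr.not_chain h') } }
  let π := Finpartition.ofSetoid s
  have hs : ∀ i j, SameBlock π i j ↔ i = j ∨ r i j ∨ r j i := by
    intro i j
    rw [sameBlock_iff, Finpartition.mem_part_ofSetoid_iff_rel]
    exact ⟨fun h => s.symm h, fun h => s.symm h⟩
  have hlt : ∀ {i j : Fin n}, i < j → SameBlock π i j → r i j := by
    intro i j hij h
    rcases (hs i j).1 h with h | h | h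
    · exact absurd h hij.ne
    · exact h
    · exact absurd (hr.lt h) (by simpa using hij.le)
  refine ⟨π, ⟨?_, ?_, ?_⟩, ?_⟩
  · intro i i' j j' h1 h2 h3 h h'
    exact absurd h3 (hr.noncrossing (hlt (h1.trans h2) h) (hlt (h2.trans h3) h') h1 h2)
  · intro B hB
    obtain ⟨i, hi⟩ := π.nonempty_of_mem_parts hB
    obtain ⟨j, hj⟩ := hr.total i i.2
    have hjn : j < n := by
      rcases hj with h | h
      · exact hr.lt_n h
      · exact (hr.lt h).trans i.2
    have hne : i ≠ ⟨j, hjn⟩ := by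
      rintro rfl
      rcases hj with h | h <;> exact lt_irrefl _ (hr.lt h)
    refine card_eq_two.2 ⟨i, ⟨j, hjn⟩, hne, ?_⟩
    ext x
    have hx : x ∈ B ↔ SameBlock π i x := ⟨fun hx => ⟨B, hB, hi, hx⟩, fun h => h.mem hB hi⟩
    rw [hx, hs, mem_insert, mem_singleton, Fin.ext_iff (b := ⟨j, hjn⟩), eq_comm (a := i)]
    refine or_congr Iff.rfl ⟨?_, ?_⟩
    · rintro (h | h) <;> rcases hj with h' | h'
      · exact hr.right_unique h h'
      · exact absurd h (hr.not_chain h')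
      · exact absurd h' (hr.not_chain h)
      · exact hr.left_unique h h'
    · intro h
      simp only at h
      rwa [h]
  · intro B hB k
    rw [card_le_one]
    intro a ha b hb
    rw [mem_filter] at ha hb
    rcases (hs a b).1 ⟨B, hB, ha.1, hb.1⟩ with h | h | h
    · exact h
    · exact absurd (ha.2.trans hb.2.symm) (hp _ _ h)
    · exact absurd (hb.2.trans ha.2.symm) (hp _ _ h)
  · funext i j
    rw [eq_iff_iff]
    constructor
    · rintro ⟨hi, hj, hij, h⟩
      exact hlt (i := ⟨i, hi⟩) (j := ⟨j, hj⟩) hij h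
    · intro h
      have hj := hr.lt_n h
      have hi := (hr.lt h).trans hj
      exact ⟨hi, hj, hr.lt h, (hs ⟨i, hi⟩ ⟨j, hj⟩).2 (Or.inr (Or.inl h))⟩

end Partitions

lemma card_partitions_eq (m d : ℕ) (hd : 1 ≤ d) :
    Nat.card {π : Finpartition (Finset.univ : Finset (Fin (m * d))) //
        IsNoncrossing π ∧ IsPairPartition π ∧ IsMPartite d π} = Nat.card (heightSeqs d m 0) := by
  refine Nat.card_eq_of_bijective
    (fun π => ⟨fun t => height (m * d) (arcs π.1) (t * d),
      (isArcs_arcs π.2.1 π.2.2.1).mem_heightSeqs hd (arcsPartite_arcs π.2.2.2)⟩) ⟨?_, ?_⟩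
  · rintro ⟨π, h1, h2, h3⟩ ⟨π', h1', h2', h3'⟩ h
    simp only [Subtype.mk.injEq] at h
    exact Subtype.ext (arcs_inj (arcs_injective hd (isArcs_arcs h1 h2) (arcsPartite_arcs h3)
      (isArcs_arcs h1' h2') (arcsPartite_arcs h3') (congrFun h)))
  · rintro ⟨h, hh⟩
    obtain ⟨r, hr, hp, hrh⟩ := arcs_surjective hd hh
    obtain ⟨π, hπ, rfl⟩ := hr.exists_partition hp
    exact ⟨⟨π, hπ⟩, Subtype.ext (funext hrh)⟩

/-! ### Counting height sequences -/

/-- Splitting off the first step of a height sequence, recorded by its number `k` of down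
steps. -/
def heightSeqsEquiv (d m a : ℕ) :
    heightSeqs d (m + 1) a ≃ Σ k : Fin (min a d + 1), heightSeqs d m (a + d - 2 * k) where
  toFun h := ⟨⟨(a + d - h.1 1) / 2, by
      obtain ⟨h, h0, h1, h2⟩ := h
      obtain ⟨k, hk⟩ := h1 0 (by omega)
      simp only [zero_add] at hk ⊢
      omega⟩, fun t => h.1 (t + 1), by
      obtain ⟨h, h0, h1, h2⟩ := h
      refine ⟨?_, fun t ht => h1 (t + 1) (by omega), fun t ht => h2 (t + 1) (by omega)⟩
      obtain ⟨k, hk⟩ := h1 0 (by omega)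
      simp only [zero_add] at hk ⊢
      omega⟩
  invFun p := ⟨fun t => Nat.casesOn t a p.2.1, by
      obtain ⟨⟨k, hk⟩, h, h0, h1, h2⟩ := p
      refine ⟨rfl, fun t ht => ?_, fun t ht => ?_⟩
      · cases t with
        | zero =>
          refine ⟨k, by omega, ?_, ?_⟩
          · change k ≤ a
            omega
          · change h 0 + 2 * k = a + d
            simp only at h0
            omega
        | succ t => exact h1 t (by omega)
      · cases t with
        | zero => omega
        | succ t => exact h2 t (by omega)⟩
  left_inv := by
    rintro ⟨h, h0, h1, h2⟩
    apply Subtype.ext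
    funext t
    cases t with
    | zero => exact h0.symm
    | succ t => rfl
  right_inv := by
    rintro ⟨⟨k, hk⟩, h, h0, h1, h2⟩
    have hk' : (a + d - h 0) / 2 = k := by simp only at h0; omega
    subst hk'
    rfl

lemma card_heightSeqs_zero (d a : ℕ) :
    Finite (heightSeqs d 0 a) ∧ Nat.card (heightSeqs d 0 a) = if a = 0 then 1 else 0 := by
  split_ifs with ha
  · have : heightSeqs d 0 a = {0} := by
      ext h
      simp only [heightSeqs, Set.mem_ofPred_eq, Set.mem_singleton_iff]
      refine ⟨fun hh => funext fun t => hh.2.2 t (by omega), ?_⟩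
      rintro rfl
      simp [ha]
    rw [this]
    exact ⟨inferInstance, by simp⟩
  · have : heightSeqs d 0 a = ∅ := by
      ext h
      simp only [heightSeqs, Set.mem_ofPred_eq, Set.mem_empty_iff_false, iff_false]
      rintro ⟨h0, -, h2⟩
      exact ha (h0 ▸ h2 0 le_rfl)
    rw [this]
    exact ⟨inferInstance, by simp⟩

lemma finite_heightSeqs (d m a : ℕ) : Finite (heightSeqs d m a) := by
  induction m generalizing a with
  | zero => exact (card_heightSeqs_zero d a).1
  | succ m ih => exact Finite.of_equiv _ (heightSeqsEquiv d m a).symm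

lemma card_heightSeqs_succ (d m a : ℕ) :
    Nat.card (heightSeqs d (m + 1) a) =
      ∑ k ∈ range (min a d + 1), Nat.card (heightSeqs d m (a + d - 2 * k)) := by
  have := fun a => finite_heightSeqs d m a
  rw [Nat.card_congr (heightSeqsEquiv d m a), Nat.card_sigma,
    Finset.sum_range (fun k => Nat.card (heightSeqs d m (a + d - 2 * k)))]

/-! ### The integral -/

open Real in
lemma sum_sin_mul_sin (c x : ℝ) (K : ℕ) :
    2 * ∑ k ∈ range K, sin ((c + 1 - 2 * k) * x) * sin x
      = cos ((c + 2 - 2 * K) * x) - cos ((c + 2) * x) := by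
  induction K with
  | zero => simp
  | succ K ih =>
    rw [sum_range_succ, mul_add, ih]
    have h1 : (c + 2 - 2 * K) * x = (c + 1 - 2 * K) * x + x := by ring
    have h2 : (c + 2 - 2 * (K + 1 : ℕ)) * x = (c + 1 - 2 * K) * x - x := by push_cast; ring
    rw [h1, h2, cos_add, cos_sub]
    ring

open Real in
/-- The product rule `U_d U_a = ∑ U_{a + d - 2k}` (`k ≤ min a d`) for Chebyshev polynomials of the
second kind at `cos x`, multiplied by `sin x ^ 2`. -/
lemma sin_mul_sin_eq_sum (a d : ℕ) (x : ℝ) :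
    sin (((d : ℝ) + 1) * x) * sin (((a : ℝ) + 1) * x) =
      ∑ k ∈ range (min a d + 1), sin ((((a + d - 2 * k : ℕ) : ℝ) + 1) * x) * sin x := by
  have hcast : ∑ k ∈ range (min a d + 1), sin ((((a + d - 2 * k : ℕ) : ℝ) + 1) * x) * sin x
      = ∑ k ∈ range (min a d + 1), sin (((a + d : ℝ) + 1 - 2 * k) * x) * sin x := by
    refine sum_congr rfl fun k hk => ?_
    rw [mem_range] at hk
    rw [Nat.cast_sub (by omega)]
    push_cast
    ring_nf
  have hsum := sum_sin_mul_sin (a + d : ℝ) x (min a d + 1)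
  rw [hcast]
  have hcos : cos (((a + d : ℝ) + 2 - 2 * (min a d + 1 : ℕ)) * x)
      = cos (((d : ℝ) + 1) * x - ((a : ℝ) + 1) * x) := by
    rcases le_total a d with h | h
    · rw [min_eq_left h]
      push_cast
      ring_nf
    · rw [min_eq_right h, ← cos_neg]
      push_cast
      ring_nf
  have hcos' : cos (((a + d : ℝ) + 2) * x) = cos (((d : ℝ) + 1) * x + ((a : ℝ) + 1) * x) := by
    ring_nf
  rw [hcos, hcos', cos_sub, cos_add] at hsum
  linarith

open Real in
lemma integral_sin_mul_sin (a : ℕ) :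
    2 / π * ∫ x in (0 : ℝ)..π, sin (((a : ℝ) + 1) * x) * sin x = if a = 0 then 1 else 0 := by
  split_ifs with ha
  · subst ha
    have : ∀ x : ℝ, sin (((0 : ℕ) + 1 : ℝ) * x) * sin x = sin x ^ 2 := by
      intro x; simp [sq]
    simp_rw [this]
    rw [integral_sin_sq]
    simp [pi_ne_zero]
  · have ha' : (a : ℝ) ≠ 0 := by exact_mod_cast ha
    have ha2 : (a : ℝ) + 2 ≠ 0 := by positivity
    have : ∀ x : ℝ, sin (((a : ℝ) + 1) * x) * sin x
        = (1 / 2) * cos (a * x) - (1 / 2) * cos ((a + 2) * x) := by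
      intro x
      have h1 : (a : ℝ) * x = (a + 1) * x - x := by ring
      have h2 : ((a : ℝ) + 2) * x = (a + 1) * x + x := by ring
      rw [h1, h2, cos_sub, cos_add]
      ring
    simp_rw [this]
    rw [intervalIntegral.integral_sub (by apply Continuous.intervalIntegrable; fun_prop)
      (by apply Continuous.intervalIntegrable; fun_prop),
      intervalIntegral.integral_const_mul, intervalIntegral.integral_const_mul,
      intervalIntegral.integral_comp_mul_left (fun x => cos x) ha',
      intervalIntegral.integral_comp_mul_left (fun x => cos x) ha2, integral_cos, integral_cos]
    have h1 : sin ((a : ℝ) * π) = 0 := sin_nat_mul_pi a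
    have h2 : sin (((a : ℝ) + 2) * π) = 0 := by exact_mod_cast sin_nat_mul_pi (a + 2)
    simp [h1, h2]

open Real in
/-- Both sides satisfy the same recursion in `m`. The function `u` is the continuous extension of
`sin ((d + 1) x) / sin x`; it makes every integrand continuous. -/
lemma card_heightSeqs_eq_integral {d : ℕ} {u : ℝ → ℝ} (hu : Continuous u)
    (hsin : ∀ x, u x * sin x = sin (((d : ℝ) + 1) * x)) (m a : ℕ) :
    (Nat.card (heightSeqs d m a) : ℝ) =
      2 / π * ∫ x in (0 : ℝ)..π, u x ^ m * (sin (((a : ℝ) + 1) * x) * sin x) := by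
  induction m generalizing a with
  | zero =>
    rw [(card_heightSeqs_zero d a).2]
    simp only [pow_zero, one_mul, integral_sin_mul_sin]
    split_ifs <;> simp
  | succ m ih =>
    rw [card_heightSeqs_succ]
    push_cast
    simp_rw [ih]
    rw [← mul_sum, ← intervalIntegral.integral_finsetSum]
    · congr 2
      funext x
      rw [← mul_sum, ← sin_mul_sin_eq_sum, ← hsin]
      ring
    · intro k _
      apply Continuous.intervalIntegrable
      fun_prop

/-- The number of `m`-partite noncrossing pair partitions of `{1, ..., md}`
(with respect to the consecutive intervals of length `d`) equals
`(2/π) ∫₀^π (sin((d+1)x)/sin x)^m · sin²x dx`. -/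
theorem card_noncrossing_eq_integral (m d : ℕ) (hd : 1 ≤ d) :
    (Nat.card {π : Finpartition (Finset.univ : Finset (Fin (m * d))) //
        IsNoncrossing π ∧ IsPairPartition π ∧ IsMPartite d π} : ℝ) =
      (2 / Real.pi) * ∫ x in (0:ℝ)..Real.pi,
        (Real.sin (((d : ℝ) + 1) * x) / Real.sin x) ^ m * Real.sin x ^ 2 := by
  have hsin : ∀ x : ℝ, (Polynomial.Chebyshev.U ℝ d).eval (Real.cos x) * Real.sin x
      = Real.sin (((d : ℝ) + 1) * x) := by
    intro x
    simp
  rw [card_partitions_eq m d hd, card_heightSeqs_eq_integral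
    (u := fun x => (Polynomial.Chebyshev.U ℝ d).eval (Real.cos x)) (by fun_prop) hsin]
  congr 2
  funext x
  -- Where `sin x = 0` both integrands vanish, whatever the value of the quotient.
  by_cases hx : Real.sin x = 0
  · simp [hx]
  · rw [← hsin x, mul_div_cancel_right₀ _ hx]
    simp [sq]
end
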